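/- (Proposition 3.6, vertical tangent at the disc.) There exists a sequence (Ω_n) of nonempty bounded open convex subsets of ℝ² such that, writing x_n := |Ω_n|·λ₁(Ω_n) and y_n := |Ω_n|·μ₁(Ω_n), and A := (π·λ₁(𝔻), π·μ₁(𝔻)) the point corresponding to the unit disc 𝔻, one has: x_n > π·λ₁(𝔻) for all n, (x_n, y_n) → A as n → ∞, and the difference quotient (π·μ₁(𝔻) − y_n)/(x_n − π·λ₁(𝔻)) → +∞. In other words, the diagram 𝓔ᶜ has a vertical tangent at the point A corresponding to discs. -/

import Mathlib

open MeasureTheory Filter Set Real RealInnerProductSpace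

noncomputable section

abbrev E2 : Type := EuclideanSpace ℝ (Fin 2)

/-- First Dirichlet eigenvalue, variational characterization. -/
noncomputable def dEig1 (Ω : Set E2) : ℝ :=
  sInf { R : ℝ | ∃ u : E2 → ℝ, ContDiff ℝ (⊤ : ℕ∞) u ∧ HasCompactSupport u ∧
    tsupport u ⊆ Ω ∧ (∫ x, (u x)^2) ≠ 0 ∧
    R = (∫ x, ‖fderiv ℝ u x‖^2) / (∫ x, (u x)^2) }

/-- First nontrivial Neumann eigenvalue, variational characterization. -/
noncomputable def nEig1 (Ω : Set E2) : ℝ :=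
  sInf { R : ℝ | ∃ u : E2 → ℝ, ContDiff ℝ (⊤ : ℕ∞) u ∧ (∫ x in Ω, u x) = 0 ∧
    (∫ x in Ω, (u x)^2) ≠ 0 ∧
    R = (∫ x in Ω, ‖fderiv ℝ u x‖^2) / (∫ x in Ω, (u x)^2) }

/-- The open unit disc in the plane. -/
def unitDisc : Set E2 := Metric.ball 0 1

/-!
The witnesses are the ellipses with semi-axes `e^{±t/2}` for small `t > 0`, which have the area of
the disc. The ground state of the disc is radial, so transplanting it to the ellipse changes the
Dirichlet energy only to second order and `λ₁` increases by at most `(cosh t - 1) λ₁(𝔻) = O(t²)`.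
The first nontrivial Neumann eigenvalue of the disc is double, and the eigenfunction proportional
to `cos θ` oscillates along the long axis of the ellipse; transplanting it lowers `μ₁` at first
order, by at least `(sinh t / 2 - (cosh t - 1)) μ₁(𝔻)`.
Hence the slope is at least of order `1 / t`.

That `λ₁` strictly increases follows without the isoperimetric inequality: `J₀(j₀₁ r)` plus a
multiple of order `t` of `J₂(j₀₁ r) cos 2θ` is a positive solution of `Δ w = -j₀₁² w` on the closed
ellipse. The value of `μ₁(𝔻)` comes from Riccati (Picone) inequalities for the angular mean of a
test function and for its fluctuation.
-/

open scoped Laplacian Topology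

/-- The Bessel–Clifford function of order `n` at `-s`, so that
`besselClifford n (r ^ 2 / 4) = (2 / r) ^ n * Jₙ(r)` for the Bessel function `Jₙ`. Unlike `Jₙ`, it
is entire in `s = r ^ 2 / 4` and composes with `‖x‖ ^ 2` into smooth functions on the plane. -/
def besselClifford (n : ℕ) (s : ℝ) : ℝ :=
  ∑' k : ℕ, (-s) ^ k / ((k.factorial : ℝ) * ((k + n).factorial : ℝ))

local notation "𝒞" => besselClifford

section BesselClifford

lemma abs_besselClifford_term_le (n k : ℕ) (s : ℝ) :
    |(-s) ^ k / ((k.factorial : ℝ) * ((k + n).factorial : ℝ))| ≤ |s| ^ k / k.factorial := by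
  have one_le_factorial : (1 : ℝ) ≤ (k + n).factorial := mod_cast Nat.factorial_pos _
  rw [abs_div, abs_pow, abs_neg, abs_of_pos (by positivity : (0 : ℝ) < k.factorial * _)]
  gcongr
  exact le_mul_of_one_le_right (by positivity) one_le_factorial

lemma summable_besselClifford (n : ℕ) (s : ℝ) :
    Summable fun k : ℕ ↦ (-s) ^ k / ((k.factorial : ℝ) * ((k + n).factorial : ℝ)) :=
  .of_norm_bounded (summable_pow_div_factorial |s|) fun k ↦ abs_besselClifford_term_le n k s

lemma besselClifford_zero_right (n : ℕ) : 𝒞 n 0 = (n.factorial : ℝ)⁻¹ := by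
  rw [besselClifford, tsum_eq_single 0 fun k hk ↦ by simp [hk]]
  simp

lemma besselClifford_term_deriv_eq (n k : ℕ) (s : ℝ) :
    -(((k + 1 : ℕ) : ℝ) * (-s) ^ k) /
        (((k + 1).factorial : ℝ) * ((k + 1 + n).factorial : ℝ)) =
      -((-s) ^ k / ((k.factorial : ℝ) * ((k + (n + 1)).factorial : ℝ))) := by
  rw [show k + 1 + n = k + (n + 1) by ring, Nat.factorial_succ k]
  push_cast
  field_simp

lemma hasDerivAt_besselClifford (n : ℕ) (s : ℝ) : HasDerivAt (𝒞 n) (-𝒞 (n + 1) s) s := by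
  let term (k : ℕ) (x : ℝ) : ℝ := (-x) ^ k / ((k.factorial : ℝ) * ((k + n).factorial : ℝ))
  let term' (k : ℕ) (x : ℝ) : ℝ :=
    -((k : ℝ) * (-x) ^ (k - 1)) / ((k.factorial : ℝ) * ((k + n).factorial : ℝ))
  let bound (k : ℕ) : ℝ := k.casesOn 0 fun j ↦ (|s| + 1) ^ j / j.factorial
  have term'_succ (k : ℕ) (x : ℝ) :
      term' (k + 1) x = -((-x) ^ k / ((k.factorial : ℝ) * ((k + (n + 1)).factorial : ℝ))) :=
    besselClifford_term_deriv_eq n k x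
  have summable_bound : Summable bound :=
    (summable_nat_add_iff 1).1 (summable_pow_div_factorial (|s| + 1))
  have norm_term'_le (k : ℕ) (x : ℝ) (hx : x ∈ Metric.ball (0 : ℝ) (|s| + 1)) :
      ‖term' k x‖ ≤ bound k := by
    rw [mem_ball_zero_iff, norm_eq_abs] at hx
    cases k with
    | zero => simp [term', bound]
    | succ k =>
      rw [term'_succ, norm_neg]
      exact (abs_besselClifford_term_le (n + 1) k x).trans (by simp only [bound]; gcongr)
  have hasDerivAt_term (k : ℕ) (x : ℝ) : HasDerivAt (term k) (term' k x) x := by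
    simpa [term', neg_div, mul_comm] using ((hasDerivAt_neg x).pow k).div_const _
  have hasDerivAt_sum : HasDerivAt (𝒞 n) (∑' k, term' k s) s :=
    hasDerivAt_tsum_of_isPreconnected summable_bound Metric.isOpen_ball
      (convex_ball _ _).isPreconnected (fun k x _ ↦ hasDerivAt_term k x) norm_term'_le
      (Metric.mem_ball_self (by positivity)) (summable_besselClifford n 0) (by simp)
  have summable_term' : Summable fun k ↦ term' k s :=
    .of_norm_bounded summable_bound fun k ↦ norm_term'_le k s (by simp)
  refine hasDerivAt_sum.congr_deriv ?_
  rw [summable_term'.tsum_eq_zero_add, besselClifford, ← tsum_neg]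
  simp only [term'_succ]
  simp [term']

lemma contDiff_besselClifford (n : ℕ) : ContDiff ℝ (⊤ : ℕ∞) (𝒞 n) := by
  have contDiff_nat (m : ℕ) : ∀ n, ContDiff ℝ m (𝒞 n) := by
    induction m with
    | zero =>
      exact fun n ↦ contDiff_zero.2 <|
        continuous_iff_continuousAt.2 fun s ↦ (hasDerivAt_besselClifford n s).continuousAt
    | succ m ih =>
      intro n
      rw [Nat.cast_succ, contDiff_succ_iff_deriv,
        funext fun s ↦ (hasDerivAt_besselClifford n s).deriv]
      exact ⟨fun s ↦ (hasDerivAt_besselClifford n s).differentiableAt, by simp, (ih (n + 1)).neg⟩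
  exact contDiff_infty.2 fun m ↦ contDiff_nat m n

@[fun_prop]
lemma continuous_besselClifford (n : ℕ) : Continuous (𝒞 n) :=
  (contDiff_besselClifford n).continuous

lemma mul_besselClifford_add_two (n : ℕ) (s : ℝ) :
    s * 𝒞 (n + 2) s = (n + 1) * 𝒞 (n + 1) s - 𝒞 n s := by
  have summable_succ := (summable_besselClifford (n + 1) s).mul_left ((n : ℝ) + 1)
  have summable_self := summable_besselClifford n s
  unfold besselClifford
  rw [← tsum_mul_left, ← tsum_mul_left, ← summable_succ.tsum_sub summable_self,
    (summable_succ.sub summable_self).tsum_eq_zero_add]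
  have constant_term_eq_zero :
      ((n : ℝ) + 1) * ((-s) ^ 0 / ((Nat.factorial 0 : ℝ) * ((0 + (n + 1)).factorial : ℝ))) -
        (-s) ^ 0 / ((Nat.factorial 0 : ℝ) * ((0 + n).factorial : ℝ)) = 0 := by
    simp only [zero_add, Nat.factorial_succ n]
    push_cast
    field_simp
    ring
  rw [constant_term_eq_zero, zero_add]
  congr 1 with k
  rw [show k + 1 + (n + 1) = (k + 1 + n) + 1 by ring, show k + (n + 2) = (k + 1 + n) + 1 by ring,
    Nat.factorial_succ (k + 1 + n), Nat.factorial_succ k]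
  push_cast
  field_simp
  ring

lemma mul_besselClifford_two (s : ℝ) : s * 𝒞 2 s = 𝒞 1 s - 𝒞 0 s := by
  simpa using mul_besselClifford_add_two 0 s

lemma hasDerivAt_pow_mul_besselClifford (n : ℕ) (s : ℝ) :
    HasDerivAt (fun s ↦ s ^ (n + 1) * 𝒞 (n + 1) s) (s ^ n * 𝒞 n s) s := by
  refine ((hasDerivAt_pow (n + 1) s).mul (hasDerivAt_besselClifford (n + 1) s)).congr_deriv ?_
  push_cast
  linear_combination -s ^ n * mul_besselClifford_add_two n s

lemma besselClifford_succ_pos {n : ℕ} {S : ℝ} (hpos : ∀ s ∈ Ioo 0 S, 0 < 𝒞 n s) {s : ℝ}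
    (hs : s ∈ Icc 0 S) : 0 < 𝒞 (n + 1) s := by
  rcases hs.1.eq_or_lt with rfl | s_pos
  · rw [besselClifford_zero_right]
    positivity
  have strictMono : StrictMonoOn (fun s ↦ s ^ (n + 1) * 𝒞 (n + 1) s) (Icc 0 s) := by
    refine strictMonoOn_of_deriv_pos (convex_Icc 0 s) (by fun_prop) fun x hx ↦ ?_
    rw [interior_Icc] at hx
    rw [(hasDerivAt_pow_mul_besselClifford n x).deriv]
    exact mul_pos (pow_pos hx.1 n) (hpos x ⟨hx.1, hx.2.trans_le hs.2⟩)
  have mul_pos : 0 < s ^ (n + 1) * 𝒞 (n + 1) s := by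
    simpa using strictMono (left_mem_Icc.2 hs.1) (right_mem_Icc.2 hs.1) s_pos
  exact pos_of_mul_pos_right mul_pos (by positivity)

-- If `𝒞 0` were positive on the half-line then `s * 𝒞 1 s` would increase, so `𝒞 0` would decay at
-- least like `-c * log s`.
lemma exists_besselClifford_zero_nonpos : ∃ s, 0 ≤ s ∧ 𝒞 0 s ≤ 0 := by
  by_contra! hpos
  set c := 𝒞 1 1
  have one_pos : 0 < c := besselClifford_succ_pos (S := 1) (fun s hs ↦ hpos s hs.1.le) (by simp)
  have mono : MonotoneOn (fun s ↦ s ^ (0 + 1) * 𝒞 (0 + 1) s) (Ici 1) := by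
    refine monotoneOn_of_deriv_nonneg (convex_Ici 1) (by fun_prop)
      (fun x _ ↦ (hasDerivAt_pow_mul_besselClifford 0 x).differentiableAt.differentiableWithinAt)
      fun x hx ↦ ?_
    rw [interior_Ici] at hx
    rw [(hasDerivAt_pow_mul_besselClifford 0 x).deriv, pow_zero, one_mul]
    exact (hpos x (zero_le_one.trans hx.le)).le
  have hasDerivAt_add_log (x : ℝ) (hx : 1 ≤ x) :
      HasDerivAt (fun s ↦ 𝒞 0 s + c * log s) (-𝒞 1 x + c * x⁻¹) x :=
    (hasDerivAt_besselClifford 0 x).add ((hasDerivAt_log (by positivity)).const_mul c)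
  have anti : AntitoneOn (fun s ↦ 𝒞 0 s + c * log s) (Ici 1) := by
    refine antitoneOn_of_deriv_nonpos (convex_Ici 1)
      (fun x hx ↦ (hasDerivAt_add_log x hx).continuousAt.continuousWithinAt)
      (fun x hx ↦ (hasDerivAt_add_log x
        (interior_subset hx)).differentiableAt.differentiableWithinAt) fun x hx ↦ ?_
    have one_le : 1 ≤ x := interior_subset hx
    have le_mul : c ≤ x * 𝒞 1 x := by simpa [c] using mono (mem_Ici.2 le_rfl) one_le one_le
    rw [(hasDerivAt_add_log x one_le).deriv, ← div_eq_mul_inv, neg_add_nonpos_iff,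
      div_le_iff₀' (by positivity)]
    exact le_mul
  have log_bound := anti (mem_Ici.2 le_rfl) (one_le_exp (div_nonneg (hpos 1 zero_le_one).le
    one_pos.le)) (one_le_exp (div_nonneg (hpos 1 zero_le_one).le one_pos.le))
  simp only [log_exp, log_one, mul_zero, add_zero, mul_div_cancel₀ _ one_pos.ne'] at log_bound
  linarith [hpos _ (exp_pos (𝒞 0 1 / c)).le]

/-- `S` is the first positive zero of `besselClifford 0`, i.e. `S = j₀₁ ^ 2 / 4` for the first
positive zero `j₀₁` of the Bessel function `J₀`. -/
structure IsFirstZero (S : ℝ) : Prop where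
  pos : 0 < S
  eq_zero : 𝒞 0 S = 0
  pos_of_lt : ∀ s, 0 ≤ s → s < S → 0 < 𝒞 0 s

lemma exists_isFirstZero : ∃ S, IsFirstZero S := by
  obtain ⟨T, T_nonneg, hT⟩ := exists_besselClifford_zero_nonpos
  have compact_zeros : IsCompact (Icc 0 T ∩ 𝒞 0 ⁻¹' Iic 0) :=
    isCompact_Icc.inter_right (isClosed_Iic.preimage (continuous_besselClifford 0))
  obtain ⟨S, ⟨hS, hS0⟩, S_le⟩ :=
    compact_zeros.exists_isLeast ⟨T, right_mem_Icc.2 T_nonneg, hT⟩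
  have zero_pos : 0 < 𝒞 0 0 := by simp [besselClifford_zero_right]
  have pos_of_lt (s : ℝ) (s_nonneg : 0 ≤ s) (hs : s < S) : 0 < 𝒞 0 s := by
    by_contra! h
    exact hs.not_ge (S_le ⟨⟨s_nonneg, hs.le.trans hS.2⟩, h⟩)
  obtain ⟨z, hz, z_zero⟩ := intermediate_value_Icc' hS.1
    (continuous_besselClifford 0).continuousOn ⟨hS0, zero_pos.le⟩
  have S_eq : z = S := hz.2.antisymm (S_le ⟨⟨hz.1, hz.2.trans hS.2⟩, z_zero.le⟩)
  subst S_eq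
  refine ⟨z, hz.1.lt_of_ne ?_, z_zero, pos_of_lt⟩
  rintro rfl
  exact zero_pos.ne' z_zero

namespace IsFirstZero

variable {S : ℝ}

lemma besselClifford_one_pos (hS : IsFirstZero S) {s : ℝ} (hs : s ∈ Icc 0 S) : 0 < 𝒞 1 s :=
  besselClifford_succ_pos (fun x hx ↦ hS.pos_of_lt x hx.1.le hx.2) hs

lemma besselClifford_two_pos (hS : IsFirstZero S) {s : ℝ} (hs : s ∈ Icc 0 S) : 0 < 𝒞 2 s :=
  besselClifford_succ_pos (fun _ hx ↦ hS.besselClifford_one_pos (Ioo_subset_Icc_self hx)) hs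

lemma mul_besselClifford_two (hS : IsFirstZero S) : S * 𝒞 2 S = 𝒞 1 S := by
  rw [_root_.mul_besselClifford_two, hS.eq_zero, sub_zero]

-- `𝒞 1` decreases from `𝒞 1 0 = 1`, so `𝒞 0` lies strictly above its tangent `1 - s` at `0`.
lemma one_lt (hS : IsFirstZero S) : 1 < S := by
  have besselClifford_one_lt (s : ℝ) (hs : s ∈ Ioo 0 S) : 𝒞 1 s < 1 := by
    have anti : StrictAntiOn (𝒞 1) (Icc 0 S) := by
      refine strictAntiOn_of_deriv_neg (convex_Icc 0 S) (by fun_prop) fun x hx ↦ ?_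
      rw [(hasDerivAt_besselClifford 1 x).deriv, neg_lt_zero]
      exact hS.besselClifford_two_pos (interior_subset hx)
    simpa [besselClifford_zero_right] using
      anti (left_mem_Icc.2 hS.pos.le) (Ioo_subset_Icc_self hs) hs.1
  have hasDerivAt_sub_tangent (x : ℝ) : HasDerivAt (fun s ↦ 𝒞 0 s + s) (-𝒞 1 x + 1) x :=
    (hasDerivAt_besselClifford 0 x).add (hasDerivAt_id x)
  have mono : StrictMonoOn (fun s ↦ 𝒞 0 s + s) (Icc 0 S) := by
    refine strictMonoOn_of_deriv_pos (convex_Icc 0 S) (by fun_prop) fun x hx ↦ ?_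
    rw [interior_Icc] at hx
    rw [(hasDerivAt_sub_tangent x).deriv]
    linarith [besselClifford_one_lt x hx]
  simpa [besselClifford_zero_right, hS.eq_zero] using
    mono (left_mem_Icc.2 hS.pos.le) (right_mem_Icc.2 hS.pos.le) hS.pos

end IsFirstZero

/-- `κ` is the first Neumann frequency: `4 * κ` is the square of the first positive zero of the
derivative of `J₁`, encoded by the Neumann condition at `r = 1` for
`r * besselClifford 1 (κ * r ^ 2)` together with the positivity of `besselClifford 0` and
`besselClifford 1` up to `κ`. -/
structure IsNeumannFrequency (κ : ℝ) : Prop where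
  pos : 0 < κ
  neumann : 𝒞 1 κ = 2 * κ * 𝒞 2 κ
  besselClifford_zero_pos : ∀ s ∈ Icc 0 κ, 0 < 𝒞 0 s
  besselClifford_one_pos : ∀ s ∈ Icc 0 κ, 0 < 𝒞 1 s

lemma IsFirstZero.exists_isNeumannFrequency {S : ℝ} (hS : IsFirstZero S) :
    ∃ κ, IsNeumannFrequency κ := by
  have continuousOn_neumann : ContinuousOn (fun s ↦ 𝒞 1 s - 2 * s * 𝒞 2 s) (Icc 0 S) := by
    fun_prop
  have neg_at_S : 𝒞 1 S - 2 * S * 𝒞 2 S < 0 := by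
    linarith [hS.mul_besselClifford_two, hS.besselClifford_one_pos (right_mem_Icc.2 hS.pos.le)]
  have pos_at_zero : 0 < 𝒞 1 0 - 2 * 0 * 𝒞 2 0 := by simp [besselClifford_zero_right]
  obtain ⟨κ, hκ, κ_zero⟩ :=
    intermediate_value_Ioo' hS.pos.le continuousOn_neumann ⟨neg_at_S, pos_at_zero⟩
  exact ⟨κ, hκ.1, sub_eq_zero.1 κ_zero, fun s hs ↦ hS.pos_of_lt s hs.1 (hs.2.trans_lt hκ.2),
    fun s hs ↦ hS.besselClifford_one_pos ⟨hs.1, hs.2.trans hκ.2.le⟩⟩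

end BesselClifford

section EllipseProfile

/-- The profile of the comparison function on a ray of direction `θ` with `c = cos (2 * θ)`, in the
variable `s = S * r ^ 2`: the function `𝒞 0 s` with a second order angular mode of amplitude
`S * c * sinh t`. -/
def ellipseProfile (S t c s : ℝ) : ℝ :=
  (1 - S * c * sinh t) * 𝒞 0 s + S * c * sinh t * 𝒞 1 s

/-- The value of `s = S * r ^ 2` at which the ray with `c = cos (2 * θ)` leaves the ellipse
`exp (-t) * x ^ 2 + exp t * y ^ 2 < 1`. -/
def ellipseExit (S t c : ℝ) : ℝ := S / (cosh t - c * sinh t)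

lemma ellipseProfile_eq (S t c s : ℝ) :
    ellipseProfile S t c s = 𝒞 0 s + S * sinh t * c * (s * 𝒞 2 s) := by
  rw [ellipseProfile, mul_besselClifford_two]
  ring

lemma cosh_sub_mul_sinh_pos {c : ℝ} (hc : c ∈ Icc (-1) 1) (t : ℝ) : 0 < cosh t - c * sinh t := by
  have sinh_lt : |sinh t| < cosh t :=
    abs_lt_of_sq_lt_sq (by linarith [cosh_sq t]) (cosh_pos t).le
  have mul_le : |c * sinh t| ≤ |sinh t| := by
    rw [abs_mul]
    exact mul_le_of_le_one_left (abs_nonneg _) (abs_le.2 hc)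
  linarith [le_abs_self (c * sinh t)]

lemma hasDerivAt_ellipseProfile (S t c s : ℝ) :
    HasDerivAt (ellipseProfile S t c)
      (-((1 - S * c * sinh t) * 𝒞 1 s + S * c * sinh t * 𝒞 2 s)) s :=
  (((hasDerivAt_besselClifford 0 s).const_mul _).add
    ((hasDerivAt_besselClifford 1 s).const_mul _)).congr_deriv (by ring)

lemma hasDerivAt_cosh_sub_mul_sinh (c t : ℝ) :
    HasDerivAt (fun t ↦ cosh t - c * sinh t) (sinh t - c * cosh t) t :=
  (hasDerivAt_cosh t).sub ((hasDerivAt_sinh t).const_mul c)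

/-- The derivative of `ellipseExit S t c` in `t`. -/
def ellipseExitDeriv (S t c : ℝ) : ℝ := -S * (sinh t - c * cosh t) / (cosh t - c * sinh t) ^ 2

/-- The second derivative of `ellipseExit S t c` in `t`. -/
def ellipseExitDeriv2 (S t c : ℝ) : ℝ :=
  S * (2 * (sinh t - c * cosh t) ^ 2 - (cosh t - c * sinh t) ^ 2) / (cosh t - c * sinh t) ^ 3

lemma hasDerivAt_ellipseExit (S : ℝ) {c : ℝ} (hc : c ∈ Icc (-1) 1) (t : ℝ) :
    HasDerivAt (fun t ↦ ellipseExit S t c) (ellipseExitDeriv S t c) t :=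
  ((hasDerivAt_const t S).div (hasDerivAt_cosh_sub_mul_sinh c t)
    (cosh_sub_mul_sinh_pos hc t).ne').congr_deriv (by rw [ellipseExitDeriv]; ring)

lemma hasDerivAt_ellipseExitDeriv (S : ℝ) {c : ℝ} (hc : c ∈ Icc (-1) 1) (t : ℝ) :
    HasDerivAt (fun t ↦ ellipseExitDeriv S t c) (ellipseExitDeriv2 S t c) t := by
  have D_ne := (cosh_sub_mul_sinh_pos hc t).ne'
  refine ((((hasDerivAt_sinh t).sub ((hasDerivAt_cosh t).const_mul c)).const_mul (-S)).div
    ((hasDerivAt_cosh_sub_mul_sinh c t).pow 2) (pow_ne_zero 2 D_ne)).congr_deriv ?_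
  simp only [ellipseExitDeriv2, Pi.pow_apply, Pi.sub_apply]
  field_simp
  ring

/-- The derivative in `t` of the profile at the boundary of the ellipse. -/
def boundaryProfileDeriv (S t c : ℝ) : ℝ :=
  S * c * cosh t * (𝒞 1 (ellipseExit S t c) - 𝒞 0 (ellipseExit S t c)) -
    ((1 - S * c * sinh t) * 𝒞 1 (ellipseExit S t c) + S * c * sinh t * 𝒞 2 (ellipseExit S t c)) *
      ellipseExitDeriv S t c

/-- The second derivative in `t` of the profile at the boundary of the ellipse. -/
def boundaryProfileDeriv2 (S t c : ℝ) : ℝ :=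
  S * c * sinh t * (𝒞 1 (ellipseExit S t c) - 𝒞 0 (ellipseExit S t c)) +
    2 * (S * c * cosh t) * (𝒞 1 (ellipseExit S t c) - 𝒞 2 (ellipseExit S t c)) *
      ellipseExitDeriv S t c +
    ((1 - S * c * sinh t) * 𝒞 2 (ellipseExit S t c) + S * c * sinh t * 𝒞 3 (ellipseExit S t c)) *
      ellipseExitDeriv S t c ^ 2 -
    ((1 - S * c * sinh t) * 𝒞 1 (ellipseExit S t c) + S * c * sinh t * 𝒞 2 (ellipseExit S t c)) *
      ellipseExitDeriv2 S t c

lemma hasDerivAt_boundaryProfile (S : ℝ) {c : ℝ} (hc : c ∈ Icc (-1) 1) (t : ℝ) :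
    HasDerivAt (fun t ↦ ellipseProfile S t c (ellipseExit S t c))
      (boundaryProfileDeriv S t c) t := by
  have exit_deriv := hasDerivAt_ellipseExit S hc t
  have amplitude_deriv := (hasDerivAt_sinh t).const_mul (S * c)
  exact (((amplitude_deriv.const_sub 1).mul ((hasDerivAt_besselClifford 0 _).comp t exit_deriv)).add
    (amplitude_deriv.mul ((hasDerivAt_besselClifford 1 _).comp t exit_deriv))).congr_deriv (by
      simp only [boundaryProfileDeriv, Function.comp_apply, zero_add, one_add_one_eq_two]
      ring)

lemma hasDerivAt_boundaryProfileDeriv (S : ℝ) {c : ℝ} (hc : c ∈ Icc (-1) 1) (t : ℝ) :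
    HasDerivAt (fun t ↦ boundaryProfileDeriv S t c) (boundaryProfileDeriv2 S t c) t := by
  have bessel_deriv (n : ℕ) :=
    (hasDerivAt_besselClifford n _).comp t (hasDerivAt_ellipseExit S hc t)
  have amplitude_deriv := (hasDerivAt_sinh t).const_mul (S * c)
  refine (((((hasDerivAt_cosh t).const_mul (S * c)).mul ((bessel_deriv 1).sub (bessel_deriv 0))).sub
    ((((amplitude_deriv.const_sub 1).mul (bessel_deriv 1)).add
      (amplitude_deriv.mul (bessel_deriv 2))).mul
        (hasDerivAt_ellipseExitDeriv S hc t)))).congr_deriv ?_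
  simp only [boundaryProfileDeriv2, Function.comp_apply, Pi.sub_apply, Pi.mul_apply, Pi.add_apply,
    zero_add, Nat.reduceAdd]
  ring

lemma pos_of_deriv2_pos {f f' f'' : ℝ → ℝ} {a b : ℝ} (hab : a < b)
    (hf : ∀ x, HasDerivAt f (f' x) x) (hf' : ∀ x, HasDerivAt f' (f'' x) x) (hfa : f a = 0)
    (hfa' : f' a = 0) (hpos : ∀ x ∈ Ioo a b, 0 < f'' x) : 0 < f b := by
  have strictMono' : StrictMonoOn f' (Icc a b) := by
    refine strictMonoOn_of_deriv_pos (convex_Icc a b) (HasDerivAt.continuousOn fun x _ ↦ hf' x) ?_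
    simpa only [interior_Icc, (hf' _).deriv] using hpos
  have strictMono : StrictMonoOn f (Icc a b) := by
    refine strictMonoOn_of_deriv_pos (convex_Icc a b) (HasDerivAt.continuousOn fun x _ ↦ hf x) ?_
    intro x hx
    rw [interior_Icc] at hx
    rw [(hf x).deriv, ← hfa']
    exact strictMono' (left_mem_Icc.2 hab.le) (Ioo_subset_Icc_self hx) hx.1
  simpa only [hfa] using strictMono (left_mem_Icc.2 hab.le) (right_mem_Icc.2 hab.le) hab

namespace IsFirstZero

variable {S : ℝ}

-- The coefficient is positive for all `|c| ≤ 1` exactly because `1 < S`.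
lemma boundaryProfileDeriv2_zero (hS : IsFirstZero S) (c : ℝ) :
    boundaryProfileDeriv2 S 0 c = S * 𝒞 1 S * (1 + (2 * S - 3) * c ^ 2) := by
  have exit_zero : ellipseExit S 0 c = S := by simp [ellipseExit]
  simp only [boundaryProfileDeriv2, ellipseExitDeriv, ellipseExitDeriv2, exit_zero, sinh_zero,
    cosh_zero]
  linear_combination (-c ^ 2 * S) * hS.mul_besselClifford_two

lemma eventually_boundaryProfileDeriv2_pos (hS : IsFirstZero S) :
    ∀ᶠ t in 𝓝 0, ∀ c ∈ Icc (-1) 1, 0 < boundaryProfileDeriv2 S t c := by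
  refine isCompact_Icc.eventually_forall_of_forall_eventually fun c hc ↦ ?_
  have D_ne := (cosh_sub_mul_sinh_pos hc 0).ne'
  have exit_cont : ContinuousAt (fun z : ℝ × ℝ ↦ ellipseExit S z.1 z.2) (0, c) := by
    unfold ellipseExit
    fun_prop (disch := exact D_ne)
  have cont : ContinuousAt (fun z : ℝ × ℝ ↦ boundaryProfileDeriv2 S z.1 z.2) (0, c) := by
    have bessel_cont (n : ℕ) : ContinuousAt (fun z : ℝ × ℝ ↦ 𝒞 n (ellipseExit S z.1 z.2)) (0, c) :=
      (continuous_besselClifford n).continuousAt.comp exit_cont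
    unfold boundaryProfileDeriv2 ellipseExitDeriv ellipseExitDeriv2
    fun_prop (disch := exact pow_ne_zero _ D_ne)
  refine cont.tendsto.eventually_const_lt ?_
  have one_pos := hS.besselClifford_one_pos (right_mem_Icc.2 hS.pos.le)
  have sq_le : c ^ 2 ≤ 1 := sq_le_one_iff_abs_le_one c |>.2 (abs_le.2 hc)
  have coeff_pos : 0 < 1 + (2 * S - 3) * c ^ 2 := by
    rcases eq_or_ne c 0 with rfl | c_ne
    · norm_num
    · have := mul_pos (sub_pos.2 hS.one_lt) (pow_pos (abs_pos.2 c_ne) 2)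
      rw [sq_abs] at this
      linarith
  have S_pos := hS.pos
  simp only [hS.boundaryProfileDeriv2_zero]
  positivity

lemma eventually_boundaryProfile_pos (hS : IsFirstZero S) :
    ∀ᶠ t in 𝓝[>] 0, ∀ c ∈ Icc (-1) 1, 0 < ellipseProfile S t c (ellipseExit S t c) := by
  obtain ⟨δ, δ_pos, hδ⟩ := Metric.eventually_nhds_iff.1 hS.eventually_boundaryProfileDeriv2_pos
  filter_upwards [Ioo_mem_nhdsGT δ_pos] with t ht c hc
  refine pos_of_deriv2_pos (f := fun t ↦ ellipseProfile S t c (ellipseExit S t c)) ht.1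
    (hasDerivAt_boundaryProfile S hc)
    (hasDerivAt_boundaryProfileDeriv S hc) ?_ ?_ fun x hx ↦ hδ ?_ c hc
  · simp [ellipseProfile, ellipseExit, hS.eq_zero]
  · simp [boundaryProfileDeriv, ellipseExitDeriv, ellipseExit, hS.eq_zero]
    ring
  · rw [dist_zero_right, norm_eq_abs, abs_of_pos hx.1]
    exact hx.2.trans ht.2

lemma eventually_antitoneOn_ellipseProfile (hS : IsFirstZero S) :
    ∀ᶠ t in 𝓝 0, ∀ c ∈ Icc (-1) 1,
      AntitoneOn (ellipseProfile S t c) (Icc 0 (ellipseExit S t c)) := by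
  have deriv_neg : ∀ᶠ t in 𝓝 (0 : ℝ), ∀ p ∈ Icc (-1 : ℝ) 1 ×ˢ Icc (0 : ℝ) 1,
      0 < (1 - S * p.1 * sinh t) * 𝒞 1 (p.2 * ellipseExit S t p.1) +
        S * p.1 * sinh t * 𝒞 2 (p.2 * ellipseExit S t p.1) := by
    refine (isCompact_Icc.prod isCompact_Icc).eventually_forall_of_forall_eventually fun p hp ↦ ?_
    have exit_cont : ContinuousAt (fun z : ℝ × ℝ × ℝ ↦ ellipseExit S z.1 z.2.1) (0, p) := by
      unfold ellipseExit
      fun_prop (disch := exact (cosh_sub_mul_sinh_pos hp.1 0).ne')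
    have bessel_cont (n : ℕ) :
        ContinuousAt (fun z : ℝ × ℝ × ℝ ↦ 𝒞 n (z.2.2 * ellipseExit S z.1 z.2.1)) (0, p) :=
      (continuous_besselClifford n).continuousAt.comp
        (f := fun z : ℝ × ℝ × ℝ ↦ z.2.2 * ellipseExit S z.1 z.2.1)
        (continuous_snd.snd.continuousAt.mul exit_cont)
    have cont : ContinuousAt (fun z : ℝ × ℝ × ℝ ↦
        (1 - S * z.2.1 * sinh z.1) * 𝒞 1 (z.2.2 * ellipseExit S z.1 z.2.1) +
          S * z.2.1 * sinh z.1 * 𝒞 2 (z.2.2 * ellipseExit S z.1 z.2.1)) (0, p) := by fun_prop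
    refine cont.tendsto.eventually_const_lt ?_
    simpa [ellipseExit] using hS.besselClifford_one_pos
      ⟨mul_nonneg hp.2.1 hS.pos.le, mul_le_of_le_one_left hS.pos.le hp.2.2⟩
  filter_upwards [deriv_neg] with t ht c hc
  refine antitoneOn_of_deriv_nonpos (convex_Icc _ _)
    (HasDerivAt.continuousOn fun s _ ↦ hasDerivAt_ellipseProfile S t c s)
    (fun s _ ↦ (hasDerivAt_ellipseProfile S t c s).differentiableAt.differentiableWithinAt)
    fun s hs ↦ ?_
  rw [interior_Icc] at hs
  have exit_pos : 0 < ellipseExit S t c := hs.1.trans hs.2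
  rw [(hasDerivAt_ellipseProfile S t c s).deriv, neg_nonpos]
  simpa [div_mul_cancel₀ s exit_pos.ne'] using
    (ht (c, s / ellipseExit S t c) ⟨hc, by have := hs.1; positivity,
      div_le_one_of_le₀ hs.2.le exit_pos.le⟩).le

lemma eventually_ellipseProfile_pos (hS : IsFirstZero S) :
    ∀ᶠ t in 𝓝[>] 0, ∀ c ∈ Icc (-1) 1, ∀ s, 0 ≤ s → s * (cosh t - c * sinh t) ≤ S →
      0 < ellipseProfile S t c s := by
  filter_upwards [hS.eventually_boundaryProfile_pos,
    nhdsWithin_le_nhds hS.eventually_antitoneOn_ellipseProfile]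
    with t boundary_pos anti c hc s hs hsS
  have s_le : s ≤ ellipseExit S t c := (le_div_iff₀ (cosh_sub_mul_sinh_pos hc t)).2 hsS
  exact (boundary_pos c hc).trans_le
    (anti c hc ⟨hs, s_le⟩ (right_mem_Icc.2 (hs.trans s_le)) s_le)

end IsFirstZero

end EllipseProfile

lemma hasCompactSupport_sq {X : Type*} [TopologicalSpace X] {u : X → ℝ} (hu : HasCompactSupport u) :
    HasCompactSupport fun x ↦ u x ^ 2 :=
  hu.comp_left (g := fun y : ℝ ↦ y ^ 2) (zero_pow two_ne_zero)

lemma integrableOn_of_isBounded {X : Type*} [MetricSpace X] [ProperSpace X]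
    [MeasurableSpace X] [OpensMeasurableSpace X] {μ : Measure X} [IsFiniteMeasureOnCompacts μ]
    {f : X → ℝ} (hf : Continuous f) {Ω : Set X} (hΩ : Bornology.IsBounded Ω) :
    IntegrableOn f Ω μ :=
  (hf.continuousOn.integrableOn_compact hΩ.isCompact_closure).mono_set subset_closure

section GroundState

open scoped ContDiff

variable {E : Type*} [NormedAddCommGroup E] [NormedSpace ℝ E] {u w φ : E → ℝ} {v : E}

/-- The derivative of `u` in the direction `v`, as a function on `E`; for the vectors `v` of an
orthonormal basis these are the partial derivatives of `u`. -/
def dirDeriv (v : E) (u : E → ℝ) (x : E) : ℝ := fderiv ℝ u x v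

lemma dirDeriv_mul {x : E} (hu : DifferentiableAt ℝ u x) (hw : DifferentiableAt ℝ w x) :
    dirDeriv v (fun x ↦ u x * w x) x = u x * dirDeriv v w x + w x * dirDeriv v u x := by
  simp [dirDeriv, fderiv_fun_mul hu hw]

lemma dirDeriv_add {x : E} (hu : DifferentiableAt ℝ u x) (hw : DifferentiableAt ℝ w x) :
    dirDeriv v (fun x ↦ u x + w x) x = dirDeriv v u x + dirDeriv v w x := by
  simp [dirDeriv, fderiv_fun_add hu hw]

lemma dirDeriv_const_mul {x : E} (c : ℝ) (hu : DifferentiableAt ℝ u x) :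
    dirDeriv v (fun x ↦ c * u x) x = c * dirDeriv v u x := by
  simp [dirDeriv, fderiv_const_mul hu]

lemma contDiff_dirDeriv {m n : ℕ∞ω} (hu : ContDiff ℝ n u) (hmn : m + 1 ≤ n) :
    ContDiff ℝ m (dirDeriv v u) :=
  (hu.fderiv_right hmn).clm_apply contDiff_const

lemma continuous_dirDeriv (hu : ContDiff ℝ 1 u) : Continuous (dirDeriv v u) :=
  (contDiff_dirDeriv (m := 0) hu (by norm_num)).continuous

lemma hasCompactSupport_dirDeriv (hu : HasCompactSupport u) : HasCompactSupport (dirDeriv v u) :=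
  hu.fderiv_apply ℝ v

lemma integral_mul_dirDeriv [FiniteDimensional ℝ E] [MeasurableSpace E] [BorelSpace E]
    {μ : Measure E} [μ.IsAddHaarMeasure] (hφ : ContDiff ℝ 1 φ) (hφs : HasCompactSupport φ)
    (hw : ContDiff ℝ 1 w) :
    ∫ x, φ x * dirDeriv v w x ∂μ = -∫ x, dirDeriv v φ x * w x ∂μ :=
  integral_mul_fderiv_eq_neg_fderiv_mul_of_integrable
    (((continuous_dirDeriv hφ).mul hw.continuous).integrable_of_hasCompactSupport
      (hasCompactSupport_dirDeriv hφs).mul_right)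
    ((hφ.continuous.mul (continuous_dirDeriv hw)).integrable_of_hasCompactSupport hφs.mul_right)
    ((hφ.continuous.mul hw.continuous).integrable_of_hasCompactSupport hφs.mul_right)
    (fun x _ ↦ hφ.differentiable one_ne_zero x) fun x _ ↦ hw.differentiable one_ne_zero x

lemma integral_dirDeriv_mul_sq [FiniteDimensional ℝ E] [MeasurableSpace E] [BorelSpace E]
    {μ : Measure E} [μ.IsAddHaarMeasure] (hw : ContDiff ℝ 2 w) (hφ : ContDiff ℝ 1 φ)
    (hφs : HasCompactSupport φ) (v : E) :
    ∫ x, dirDeriv v (fun x ↦ w x * φ x) x ^ 2 ∂μ =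
      ∫ x, w x ^ 2 * dirDeriv v φ x ^ 2 ∂μ -
        ∫ x, φ x ^ 2 * w x * dirDeriv v (dirDeriv v w) x ∂μ := by
  have hw1 : ContDiff ℝ 1 w := hw.of_le one_le_two
  have hdw : ContDiff ℝ 1 (dirDeriv v w) := contDiff_dirDeriv hw (by norm_num)
  have hdφ := continuous_dirDeriv (v := v) hφ
  have hsupp : HasCompactSupport fun x ↦ φ x ^ 2 * w x := (hasCompactSupport_sq hφs).mul_right
  have hC1 : ContDiff ℝ 1 fun x ↦ φ x ^ 2 * w x := (hφ.pow 2).mul hw1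
  rw [integral_mul_dirDeriv hC1 hsupp hdw, sub_neg_eq_add, ← integral_add]
  · congr! 2 with x
    have diff_w := hw1.differentiable one_ne_zero x
    have diff_φ := hφ.differentiable one_ne_zero x
    rw [dirDeriv_mul diff_w diff_φ, dirDeriv_mul (diff_φ.fun_pow 2) diff_w]
    simp only [pow_two]
    rw [dirDeriv_mul diff_φ diff_φ]
    ring
  · exact ((hw1.continuous.pow 2).mul (hdφ.pow 2)).integrable_of_hasCompactSupport
      (hasCompactSupport_sq (hasCompactSupport_dirDeriv hφs)).mul_left
  · exact ((continuous_dirDeriv hC1).mul hdw.continuous).integrable_of_hasCompactSupport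
      (hasCompactSupport_dirDeriv hsupp).mul_right

end GroundState

section Laplacian

open scoped ContDiff

variable {E : Type*} [NormedAddCommGroup E] [InnerProductSpace ℝ E] {w φ : E → ℝ}
  {ι : Type*} [Fintype ι] (b : OrthonormalBasis ι ℝ E)

lemma norm_fderiv_sq_eq_sum (u : E → ℝ) (x : E) :
    ‖fderiv ℝ u x‖ ^ 2 = ∑ i, dirDeriv (b i) u x ^ 2 := by
  have := b.toBasis.finiteDimensional_of_finite
  rw [← (InnerProductSpace.toDual ℝ E).symm.norm_map, ← b.sum_sq_norm_inner_left]
  simp [dirDeriv]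

variable [FiniteDimensional ℝ E]

lemma laplacian_eq_sum_dirDeriv (hw : ContDiff ℝ 2 w) (x : E) :
    Δ w x = ∑ i, dirDeriv (b i) (dirDeriv (b i) w) x := by
  rw [InnerProductSpace.laplacian_eq_iteratedFDeriv_orthonormalBasis w b]
  refine Finset.sum_congr rfl fun i _ ↦ ?_
  have hdw : DifferentiableAt ℝ (fderiv ℝ w) x :=
    (hw.fderiv_right (m := 1) (by norm_num)).differentiable one_ne_zero x
  rw [iteratedFDeriv_two_apply]
  unfold dirDeriv
  rw [fderiv_clm_apply hdw (differentiableAt_const _)]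
  simp

lemma continuous_laplacian (hw : ContDiff ℝ 2 w) : Continuous (Δ w) := by
  rw [funext (laplacian_eq_sum_dirDeriv (stdOrthonormalBasis ℝ E) hw)]
  exact continuous_finsetSum _ fun i _ ↦
    continuous_dirDeriv (contDiff_dirDeriv hw (by norm_num))

-- For `w > 0` and `φ = u / w` this is the ground state representation of the Dirichlet energy.
lemma integral_norm_fderiv_mul_sq [MeasurableSpace E] [BorelSpace E] {μ : Measure E}
    [μ.IsAddHaarMeasure] (hw : ContDiff ℝ 2 w) (hφ : ContDiff ℝ 1 φ) (hφs : HasCompactSupport φ) :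
    ∫ x, ‖fderiv ℝ (fun x ↦ w x * φ x) x‖ ^ 2 ∂μ =
      ∫ x, w x ^ 2 * ‖fderiv ℝ φ x‖ ^ 2 ∂μ - ∫ x, φ x ^ 2 * w x * Δ w x ∂μ := by
  let b := stdOrthonormalBasis ℝ E
  have hw1 : ContDiff ℝ 1 w := hw.of_le one_le_two
  have int_energy (i) : Integrable (fun x ↦ dirDeriv (b i) (fun x ↦ w x * φ x) x ^ 2) μ :=
    ((continuous_dirDeriv (hw1.mul hφ)).pow 2).integrable_of_hasCompactSupport
      (hasCompactSupport_sq (hasCompactSupport_dirDeriv hφs.mul_left))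
  have int_fderiv (i) : Integrable (fun x ↦ w x ^ 2 * dirDeriv (b i) φ x ^ 2) μ :=
    ((hw1.continuous.pow 2).mul ((continuous_dirDeriv hφ).pow 2)).integrable_of_hasCompactSupport
      (hasCompactSupport_sq (hasCompactSupport_dirDeriv hφs)).mul_left
  have int_laplacian (i) :
      Integrable (fun x ↦ φ x ^ 2 * w x * dirDeriv (b i) (dirDeriv (b i) w) x) μ :=
    (((hφ.continuous.pow 2).mul hw1.continuous).mul
      (continuous_dirDeriv (contDiff_dirDeriv hw (by norm_num)))).integrable_of_hasCompactSupport
      (hasCompactSupport_sq hφs).mul_right.mul_right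
  simp only [norm_fderiv_sq_eq_sum b, laplacian_eq_sum_dirDeriv b hw, Finset.mul_sum]
  rw [integral_finsetSum _ fun i _ ↦ int_energy i, integral_finsetSum _ fun i _ ↦ int_fderiv i,
    integral_finsetSum _ fun i _ ↦ int_laplacian i, ← Finset.sum_sub_distrib]
  exact Finset.sum_congr rfl fun i _ ↦ integral_dirDeriv_mul_sq hw hφ hφs (b i)

end Laplacian

section Dirichlet

open scoped ContDiff

variable {Ω : Set E2} {u w : E2 → ℝ} {Λ : ℝ}

/-- The test functions in the variational characterization of `dEig1 Ω`. -/
structure IsDirichletTest (Ω : Set E2) (u : E2 → ℝ) : Prop where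
  contDiff : ContDiff ℝ ∞ u
  hasCompactSupport : HasCompactSupport u
  tsupport_subset : tsupport u ⊆ Ω

lemma IsDirichletTest.contDiff_one (hu : IsDirichletTest Ω u) : ContDiff ℝ 1 u :=
  hu.contDiff.of_le (mod_cast le_top)

lemma IsDirichletTest.integrable_sq (hu : IsDirichletTest Ω u) : Integrable fun x ↦ u x ^ 2 :=
  (hu.contDiff.continuous.pow 2).integrable_of_hasCompactSupport
    (hasCompactSupport_sq hu.hasCompactSupport)

lemma exists_isDirichletTest_integral_sq_pos (hΩ : IsOpen Ω) (hne : Ω.Nonempty) :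
    ∃ u, IsDirichletTest Ω u ∧ 0 < ∫ x, u x ^ 2 := by
  obtain ⟨x, hx⟩ := hne
  obtain ⟨u, u_sub, u_supp, u_smooth, -, u_one⟩ :=
    exists_contDiff_tsupport_subset (n := ⊤) (hΩ.mem_nhds hx)
  refine ⟨u, ⟨u_smooth, u_supp, u_sub⟩, ?_⟩
  exact (u_smooth.continuous.pow 2).integral_pos_of_hasCompactSupport_nonneg_nonzero
    (hasCompactSupport_sq u_supp) (fun y ↦ sq_nonneg _) (by simp [u_one] : u x ^ 2 ≠ 0)

lemma dEig1_mul_integral_sq_le (hu : IsDirichletTest Ω u) :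
    dEig1 Ω * ∫ x, u x ^ 2 ≤ ∫ x, ‖fderiv ℝ u x‖ ^ 2 := by
  rcases eq_or_ne (∫ x, u x ^ 2) 0 with mass_zero | mass_ne
  · rw [mass_zero, mul_zero]
    positivity
  · refine (le_div_iff₀ (mass_ne.symm.lt_of_le (by positivity))).1 (csInf_le ⟨0, ?_⟩
      ⟨u, hu.contDiff, hu.hasCompactSupport, hu.tsupport_subset, mass_ne, rfl⟩)
    rintro _ ⟨v, -, -, -, -, rfl⟩
    positivity

lemma le_dEig1 (hΩ : IsOpen Ω) (hne : Ω.Nonempty)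
    (hΛ : ∀ u, IsDirichletTest Ω u → Λ * ∫ x, u x ^ 2 ≤ ∫ x, ‖fderiv ℝ u x‖ ^ 2) :
    Λ ≤ dEig1 Ω := by
  obtain ⟨u, hu, mass_pos⟩ := exists_isDirichletTest_integral_sq_pos hΩ hne
  refine le_csInf
    ⟨_, u, hu.contDiff, hu.hasCompactSupport, hu.tsupport_subset, mass_pos.ne', rfl⟩ ?_
  rintro _ ⟨v, hv, v_supp, v_sub, v_ne, rfl⟩
  exact (le_div_iff₀ (v_ne.symm.lt_of_le (by positivity))).2 (hΛ v ⟨hv, v_supp, v_sub⟩)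

lemma contDiff_div_of_pos_on_tsupport {n : ℕ∞ω} (hu : ContDiff ℝ n u) (hw : ContDiff ℝ n w)
    (hpos : ∀ x ∈ tsupport u, 0 < w x) : ContDiff ℝ n fun x ↦ u x / w x := by
  refine contDiff_iff_contDiffAt.2 fun x ↦ ?_
  by_cases hx : x ∈ tsupport u
  · exact hu.contDiffAt.div hw.contDiffAt (hpos x hx).ne'
  · refine contDiffAt_const.congr_of_eventuallyEq (f := fun _ ↦ (0 : ℝ)) ?_
    filter_upwards [notMem_tsupport_iff_eventuallyEq.1 hx] with y hy
    simp [hy]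

lemma le_dEig1_of_pos_supersolution (hΩ : IsOpen Ω) (hne : Ω.Nonempty) (hw : ContDiff ℝ 2 w)
    (hpos : ∀ x ∈ Ω, 0 < w x) (hΛ : ∀ x ∈ Ω, Λ * w x ≤ -Δ w x) : Λ ≤ dEig1 Ω := by
  refine le_dEig1 hΩ hne fun u hu ↦ ?_
  set φ : E2 → ℝ := fun x ↦ u x / w x with hφ_def
  have mul_φ (x : E2) : w x * φ x = u x := by
    by_cases hx : x ∈ tsupport u
    · exact mul_div_cancel₀ _ (hpos x (hu.tsupport_subset hx)).ne'
    · simp [hφ_def, image_eq_zero_of_notMem_tsupport hx]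
  have hφ : ContDiff ℝ 1 φ := contDiff_div_of_pos_on_tsupport hu.contDiff_one
    (hw.of_le one_le_two) fun x hx ↦ hpos x (hu.tsupport_subset hx)
  have φ_supp : HasCompactSupport φ :=
    hu.hasCompactSupport.mono fun x hx h ↦ hx (by simp [hφ_def, h])
  have supersolution (x : E2) : Λ * u x ^ 2 ≤ -(φ x ^ 2 * w x * Δ w x) := by
    by_cases hx : x ∈ tsupport u
    · have hxΩ := hu.tsupport_subset hx
      calc Λ * u x ^ 2 = φ x ^ 2 * w x * (Λ * w x) := by rw [← mul_φ x]; ring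
        _ ≤ φ x ^ 2 * w x * -Δ w x :=
          mul_le_mul_of_nonneg_left (hΛ x hxΩ) (mul_nonneg (sq_nonneg _) (hpos x hxΩ).le)
        _ = _ := by ring
    · simp [hφ_def, image_eq_zero_of_notMem_tsupport hx]
  have int_Δ : Integrable fun x ↦ φ x ^ 2 * w x * Δ w x :=
    (((hφ.continuous.pow 2).mul hw.continuous).mul
      (continuous_laplacian hw)).integrable_of_hasCompactSupport
      (hasCompactSupport_sq φ_supp).mul_right.mul_right
  calc Λ * ∫ x, u x ^ 2 = ∫ x, Λ * u x ^ 2 := (integral_const_mul _ _).symm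
    _ ≤ ∫ x, -(φ x ^ 2 * w x * Δ w x) :=
      integral_mono (hu.integrable_sq.const_mul Λ) int_Δ.neg supersolution
    _ = -∫ x, φ x ^ 2 * w x * Δ w x := integral_neg _
    _ ≤ (∫ x, w x ^ 2 * ‖fderiv ℝ φ x‖ ^ 2) - ∫ x, φ x ^ 2 * w x * Δ w x := by
      rw [neg_eq_zero_sub]
      gcongr
      positivity
    _ = ∫ x, ‖fderiv ℝ u x‖ ^ 2 := by
      rw [← integral_norm_fderiv_mul_sq hw hφ φ_supp, funext mul_φ]

lemma lt_dEig1_of_pos_eigenfunction (hΩ : IsOpen Ω) (hne : Ω.Nonempty)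
    (hbdd : Bornology.IsBounded Ω) (hw : ContDiff ℝ 2 w) (hpos : ∀ x ∈ closure Ω, 0 < w x)
    (hΛ_pos : 0 < Λ) (hΛ : ∀ x ∈ Ω, Δ w x = -Λ * w x) : Λ < dEig1 Ω := by
  have compact : IsCompact (closure Ω) := hbdd.isCompact_closure
  have ne := hne.closure
  obtain ⟨xmin, hmin, le_w⟩ := compact.exists_isMinOn ne hw.continuous.continuousOn
  obtain ⟨xmax, hmax, w_le⟩ := compact.exists_isMaxOn ne hw.continuous.continuousOn
  set δ := w xmin / 2
  set M := w xmax
  have δ_pos : 0 < δ := half_pos (hpos _ hmin)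
  have δ_lt (x) (hx : x ∈ Ω) : δ < w x :=
    (half_lt_self (hpos _ hmin)).trans_le (le_w (subset_closure hx))
  have M_sub_pos : 0 < M - δ := sub_pos.2 ((half_lt_self (hpos _ hmin)).trans_le (le_w hmax))
  have Λ_lt : Λ < Λ * (M / (M - δ)) :=
    lt_mul_of_one_lt_right hΛ_pos ((one_lt_div M_sub_pos).2 (by linarith))
  have laplacian_sub (x : E2) : Δ (fun x ↦ w x - δ) x = Δ w x := by
    have := (hw.contDiffAt (x := x)).laplacian_sub (contDiffAt_const (c := δ))
    simpa [Pi.sub_def] using this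
  refine Λ_lt.trans_le (le_dEig1_of_pos_supersolution hΩ hne (hw.sub contDiff_const)
    (fun x hx ↦ sub_pos.2 (δ_lt x hx)) fun x hx ↦ ?_)
  rw [laplacian_sub, hΛ x hx, neg_mul, neg_neg, mul_assoc]
  refine mul_le_mul_of_nonneg_left ?_ hΛ_pos.le
  rw [div_mul_eq_mul_div, div_le_iff₀ M_sub_pos]
  linarith [mul_le_mul_of_nonneg_right (w_le (subset_closure hx) : w x ≤ M) δ_pos.le]

end Dirichlet

section BesselModes

open scoped ContDiff

variable {E : Type*} [NormedAddCommGroup E] [InnerProductSpace ℝ E]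

/-- The radial function `x ↦ 𝒞 n (S * ‖x‖ ^ 2)`, the radial factor of the eigenfunctions of the
Laplacian with angular frequency `n` and eigenvalue `4 * S`. -/
def radialBessel (n : ℕ) (S : ℝ) (x : E) : ℝ := 𝒞 n (S * ‖x‖ ^ 2)

lemma contDiff_radialBessel (n : ℕ) (S : ℝ) {m : ℕ∞} : ContDiff ℝ m (radialBessel n S : E → ℝ) :=
  ((contDiff_besselClifford n).of_le (mod_cast le_top)).comp
    (contDiff_const.mul (contDiff_norm_sq ℝ))

lemma dirDeriv_radialBessel (n : ℕ) (S : ℝ) (v x : E) :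
    dirDeriv v (radialBessel n S) x = -(2 * S) * (⟪x, v⟫ * radialBessel (n + 1) S x) := by
  have inner_deriv := ((hasStrictFDerivAt_norm_sq x).hasFDerivAt).const_mul S
  have := (hasDerivAt_besselClifford n (S * ‖x‖ ^ 2)).comp_hasFDerivAt x inner_deriv
  have hfd : HasFDerivAt (radialBessel n S) _ x := this
  rw [dirDeriv, hfd.fderiv]
  simp [radialBessel]
  ring

lemma dirDeriv_dirDeriv_mul_radialBessel {p : E → ℝ} (hp : ContDiff ℝ 2 p) (n : ℕ) (S : ℝ)
    (v x : E) :
    dirDeriv v (dirDeriv v fun x ↦ p x * radialBessel n S x) x =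
      dirDeriv v (dirDeriv v p) x * radialBessel n S x -
        2 * S * (2 * (⟪x, v⟫ * dirDeriv v p x) + ‖v‖ ^ 2 * p x) * radialBessel (n + 1) S x +
        4 * S ^ 2 * ⟪x, v⟫ ^ 2 * p x * radialBessel (n + 2) S x := by
  have diff_radial (k : ℕ) (x : E) : DifferentiableAt ℝ (radialBessel k S) x :=
    (contDiff_radialBessel k S (m := 1)).differentiable one_ne_zero x
  have diff_p (x : E) : DifferentiableAt ℝ p x := hp.differentiable two_ne_zero x
  have diff_dp : DifferentiableAt ℝ (dirDeriv v p) x :=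
    (contDiff_dirDeriv hp (m := 1) (by norm_num)).differentiable one_ne_zero x
  have diff_inner : DifferentiableAt ℝ (fun x ↦ ⟪x, v⟫) x :=
    differentiableAt_id.inner ℝ (differentiableAt_const v)
  have first : (dirDeriv v fun x ↦ p x * radialBessel n S x) = fun x ↦
      p x * (-(2 * S) * (⟪x, v⟫ * radialBessel (n + 1) S x)) +
        radialBessel n S x * dirDeriv v p x :=
    funext fun x ↦ by rw [dirDeriv_mul (diff_p x) (diff_radial n x), dirDeriv_radialBessel]
  have inner_deriv : dirDeriv v (fun x ↦ ⟪x, v⟫) x = ‖v‖ ^ 2 := by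
    rw [dirDeriv, fderiv_inner_apply ℝ differentiableAt_fun_id (differentiableAt_const v)]
    simp
  have diff_prod := diff_inner.fun_mul (diff_radial (n + 1) x)
  rw [first, dirDeriv_add ((diff_p x).fun_mul (diff_prod.const_mul _))
    ((diff_radial n x).fun_mul diff_dp), dirDeriv_mul (diff_p x) (diff_prod.const_mul _),
    dirDeriv_const_mul _ diff_prod, dirDeriv_mul diff_inner (diff_radial _ x),
    dirDeriv_mul (diff_radial n x) diff_dp, inner_deriv]
  simp only [dirDeriv_radialBessel]
  ring

lemma laplacian_mul_radialBessel [FiniteDimensional ℝ E] (hE : Module.finrank ℝ E = 2) {p : E → ℝ}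
    (hp : ContDiff ℝ 2 p) {n : ℕ} (harmonic : Δ p = 0)
    (homogeneous : ∀ x, dirDeriv x p x = n * p x) (S : ℝ) (x : E) :
    Δ (fun x ↦ p x * radialBessel n S x) x = -(4 * S) * (p x * radialBessel n S x) := by
  let b := stdOrthonormalBasis ℝ E
  have sum_dirDeriv : ∑ i, ⟪x, b i⟫ * dirDeriv (b i) p x = n * p x := by
    calc ∑ i, ⟪x, b i⟫ * dirDeriv (b i) p x = fderiv ℝ p x (∑ i, ⟪b i, x⟫ • b i) := by
          simp [dirDeriv, real_inner_comm]
      _ = n * p x := by rw [b.sum_repr', ← homogeneous, dirDeriv]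
  have sum_inner_sq : ∑ i, ⟪x, b i⟫ ^ 2 = ‖x‖ ^ 2 := by
    simpa using b.sum_sq_norm_inner_left x
  have sum_second : ∑ i, dirDeriv (b i) (dirDeriv (b i) p) x = 0 := by
    rw [← laplacian_eq_sum_dirDeriv b hp, harmonic, Pi.zero_apply]
  rw [laplacian_eq_sum_dirDeriv b (hp.mul (contDiff_radialBessel n S))]
  simp only [dirDeriv_dirDeriv_mul_radialBessel hp, b.norm_eq_one, one_pow, one_mul,
    Finset.sum_add_distrib, Finset.sum_sub_distrib, ← Finset.sum_mul, ← Finset.mul_sum, sum_second,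
    sum_dirDeriv, sum_inner_sq, Finset.sum_const, Finset.card_univ, Fintype.card_fin, hE]
  unfold radialBessel
  linear_combination 4 * S * p x * mul_besselClifford_add_two n (S * ‖x‖ ^ 2)

/-- The harmonic polynomial `x ^ 2 - y ^ 2 = r ^ 2 * cos (2 * θ)` on the plane. -/
def quadrupole (x : E2) : ℝ := x 0 ^ 2 - x 1 ^ 2

lemma contDiff_coord (i : Fin 2) {n : ℕ∞ω} : ContDiff ℝ n fun x : E2 ↦ x i :=
  (EuclideanSpace.proj (𝕜 := ℝ) i).contDiff

lemma contDiff_quadrupole {n : ℕ∞ω} : ContDiff ℝ n quadrupole :=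
  ((contDiff_coord 0).pow 2).sub ((contDiff_coord 1).pow 2)

lemma dirDeriv_coord (i : Fin 2) (v x : E2) : dirDeriv v (fun x : E2 ↦ x i) x = v i := by
  exact congrArg (· v) (EuclideanSpace.proj (𝕜 := ℝ) i).fderiv

lemma dirDeriv_quadrupole (v x : E2) : dirDeriv v quadrupole x = 2 * (x 0 * v 0 - x 1 * v 1) := by
  have coord_deriv (i : Fin 2) :
      HasFDerivAt (fun x : E2 ↦ x i) (EuclideanSpace.proj i : E2 →L[ℝ] ℝ) x :=
    (EuclideanSpace.proj i : E2 →L[ℝ] ℝ).hasFDerivAt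
  have := ((coord_deriv 0).pow 2).sub ((coord_deriv 1).pow 2)
  rw [dirDeriv, show fderiv ℝ quadrupole x = _ from this.fderiv]
  simp
  ring

lemma laplacian_quadrupole : Δ quadrupole = 0 := by
  ext x
  let b := EuclideanSpace.basisFun (Fin 2) ℝ
  have linear_deriv (v : E2) :
      dirDeriv v quadrupole = fun x : E2 ↦ 2 * v 0 * x 0 + -2 * v 1 * x 1 :=
    funext fun x ↦ by rw [dirDeriv_quadrupole]; ring
  have diff_coord (i : Fin 2) : DifferentiableAt ℝ (fun x : E2 ↦ x i) x :=
    (contDiff_coord i (n := 1)).differentiable one_ne_zero x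
  have second (v : E2) : dirDeriv v (dirDeriv v quadrupole) x = 2 * (v 0 ^ 2 - v 1 ^ 2) := by
    rw [linear_deriv, dirDeriv_add ((diff_coord 0).const_mul _) ((diff_coord 1).const_mul _),
      dirDeriv_const_mul _ (diff_coord 0), dirDeriv_const_mul _ (diff_coord 1), dirDeriv_coord,
      dirDeriv_coord]
    ring
  simp [laplacian_eq_sum_dirDeriv b contDiff_quadrupole, second, b]

lemma laplacian_radialBessel_zero (S : ℝ) (x : E2) :
    Δ (radialBessel 0 S : E2 → ℝ) x = -(4 * S) * radialBessel 0 S x := by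
  simpa using laplacian_mul_radialBessel (finrank_euclideanSpace_fin (𝕜 := ℝ)) (p := fun _ ↦ 1)
    contDiff_const (InnerProductSpace.laplacian_const) (n := 0) (by simp [dirDeriv]) S x

lemma laplacian_quadrupole_mul_radialBessel (S : ℝ) (x : E2) :
    Δ (fun x ↦ quadrupole x * radialBessel 2 S x) x =
      -(4 * S) * (quadrupole x * radialBessel 2 S x) :=
  laplacian_mul_radialBessel finrank_euclideanSpace_fin contDiff_quadrupole laplacian_quadrupole
    (fun x ↦ by rw [dirDeriv_quadrupole, quadrupole]; push_cast; ring) S x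

end BesselModes

section Ellipse

/-- The area-preserving linear map `diag (e^{t/2}, e^{-t/2})` of the plane. -/
def stretch (t : ℝ) : E2 ≃L[ℝ] E2 :=
  LinearEquiv.toContinuousLinearEquiv
    { toFun := fun x ↦ !₂[exp (t / 2) * x 0, exp (-(t / 2)) * x 1]
      invFun := fun x ↦ !₂[exp (-(t / 2)) * x 0, exp (t / 2) * x 1]
      map_add' := fun x y ↦ by ext i; fin_cases i <;> simp [mul_add]
      map_smul' := fun c x ↦ by ext i; fin_cases i <;> simp [mul_left_comm]
      left_inv := fun x ↦ by ext i; fin_cases i <;> simp [← mul_assoc, ← exp_add]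
      right_inv := fun x ↦ by ext i; fin_cases i <;> simp [← mul_assoc, ← exp_add] }

lemma stretch_apply_zero (t : ℝ) (x : E2) : stretch t x 0 = exp (t / 2) * x 0 := rfl

lemma stretch_apply_one (t : ℝ) (x : E2) : stretch t x 1 = exp (-(t / 2)) * x 1 := rfl

lemma stretch_symm (t : ℝ) : (stretch t).symm = stretch (-t) := by
  refine ContinuousLinearEquiv.ext (funext fun x ↦ (stretch t).symm_apply_eq.2 ?_)
  ext i
  fin_cases i <;> simp [stretch_apply_zero, stretch_apply_one, ← mul_assoc, ← exp_add, neg_div]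

lemma measurePreserving_stretch (t : ℝ) : MeasurePreserving (stretch t) := by
  have det_eq_one : LinearMap.det (stretch t : E2 →ₗ[ℝ] E2) = 1 := by
    rw [← LinearMap.det_toMatrix (EuclideanSpace.basisFun (Fin 2) ℝ).toBasis, Matrix.det_fin_two]
    simp [LinearMap.toMatrix_apply, stretch_apply_zero, stretch_apply_one, ← exp_add]
  refine ⟨(stretch t).continuous.measurable, ?_⟩
  have := Measure.map_linearMap_addHaar_eq_smul_addHaar (volume : Measure E2)
    (f := (stretch t : E2 →ₗ[ℝ] E2)) (by simp [det_eq_one])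
  simpa [det_eq_one] using this

lemma exp_half_sq (t : ℝ) : exp (t / 2) ^ 2 = exp t := by
  rw [exp_half, sq_sqrt (exp_nonneg t)]

lemma norm_stretch_sq (t : ℝ) (x : E2) :
    ‖stretch t x‖ ^ 2 = cosh t * ‖x‖ ^ 2 + sinh t * quadrupole x := by
  simp only [EuclideanSpace.real_norm_sq_eq, Fin.sum_univ_two, stretch_apply_zero,
    stretch_apply_one, quadrupole, mul_pow, ← neg_div, exp_half_sq, cosh_eq, sinh_eq]
  ring

/-- The ellipse with semi-axes `e^{t/2}` and `e^{-t/2}`, of the same area as the unit disc. -/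
def ellipse (t : ℝ) : Set E2 := stretch t '' unitDisc

lemma ellipse_eq_preimage (t : ℝ) : ellipse t = stretch (-t) ⁻¹' unitDisc := by
  rw [ellipse, ← stretch_symm, (stretch t).image_eq_preimage_symm]

lemma mem_ellipse {t : ℝ} {x : E2} :
    x ∈ ellipse t ↔ cosh t * ‖x‖ ^ 2 - sinh t * quadrupole x < 1 := by
  rw [ellipse_eq_preimage, mem_preimage, unitDisc, mem_ball_zero_iff,
    ← sq_lt_one_iff₀ (norm_nonneg _), norm_stretch_sq, cosh_neg, sinh_neg, neg_mul, sub_eq_add_neg]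

lemma isOpen_ellipse (t : ℝ) : IsOpen (ellipse t) :=
  (stretch t).isOpenMap _ Metric.isOpen_ball

lemma nonempty_ellipse (t : ℝ) : (ellipse t).Nonempty :=
  (Metric.nonempty_ball.2 one_pos).image _

lemma isBounded_ellipse (t : ℝ) : Bornology.IsBounded (ellipse t) :=
  (stretch t).lipschitz.isBounded_image Metric.isBounded_ball

lemma convex_ellipse (t : ℝ) : Convex ℝ (ellipse t) :=
  (convex_ball 0 1).linear_image (stretch t : E2 →ₗ[ℝ] E2)

lemma volume_ellipse (t : ℝ) : (volume (ellipse t)).toReal = π := by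
  rw [ellipse_eq_preimage, unitDisc, (measurePreserving_stretch _).measure_preimage
    measurableSet_ball.nullMeasurableSet, EuclideanSpace.volume_ball_fin_two]
  simp [pi_nonneg]

lemma closure_ellipse_subset (t : ℝ) :
    closure (ellipse t) ⊆ {x | cosh t * ‖x‖ ^ 2 - sinh t * quadrupole x ≤ 1} := by
  refine closure_minimal (fun x hx ↦ (mem_ellipse.1 hx).le) (isClosed_le ?_ continuous_const)
  have := contDiff_quadrupole (n := 0) |>.continuous
  fun_prop

end Ellipse

section EllipseEigenfunction

variable {S t : ℝ}

/-- A solution of `Δ w = -4 S w` on the plane. When `S` is the first zero of `𝒞 0`, it vanishes on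
the boundary of `ellipse t` to first order in `t`. -/
def ellipseEigenfunction (S t : ℝ) (x : E2) : ℝ :=
  radialBessel 0 S x + S ^ 2 * sinh t * (quadrupole x * radialBessel 2 S x)

lemma contDiff_ellipseEigenfunction : ContDiff ℝ 2 (ellipseEigenfunction S t) :=
  (contDiff_radialBessel 0 S).add
    (contDiff_const.mul (contDiff_quadrupole.mul (contDiff_radialBessel 2 S)))

lemma laplacian_ellipseEigenfunction (S t : ℝ) (x : E2) :
    Δ (ellipseEigenfunction S t) x = -(4 * S) * ellipseEigenfunction S t x := by
  have quadrupole_mode : ContDiff ℝ 2 fun x ↦ quadrupole x * radialBessel 2 S x :=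
    contDiff_quadrupole.mul (contDiff_radialBessel 2 S)
  calc Δ (ellipseEigenfunction S t) x
      = Δ (radialBessel 0 S : E2 → ℝ) x +
          (S ^ 2 * sinh t) * Δ (fun x ↦ quadrupole x * radialBessel 2 S x) x := by
        rw [← smul_eq_mul, ← InnerProductSpace.laplacian_smul _ quadrupole_mode.contDiffAt]
        exact (contDiff_radialBessel 0 S).contDiffAt.laplacian_add
          (quadrupole_mode.const_smul (S ^ 2 * sinh t)).contDiffAt
    _ = -(4 * S) * ellipseEigenfunction S t x := by
        rw [laplacian_radialBessel_zero, laplacian_quadrupole_mul_radialBessel]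
        unfold ellipseEigenfunction
        ring

lemma abs_quadrupole_le (x : E2) : |quadrupole x| ≤ ‖x‖ ^ 2 := by
  rw [EuclideanSpace.real_norm_sq_eq, Fin.sum_univ_two, quadrupole, abs_le]
  constructor <;> linarith [sq_nonneg (x 0), sq_nonneg (x 1)]

lemma ellipseEigenfunction_eq {x : E2} (hx : x ≠ 0) :
    ellipseEigenfunction S t x = ellipseProfile S t (quadrupole x / ‖x‖ ^ 2) (S * ‖x‖ ^ 2) := by
  have := norm_ne_zero_iff.2 hx
  rw [ellipseProfile_eq, ellipseEigenfunction, radialBessel, radialBessel]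
  field_simp

lemma IsFirstZero.eventually_lt_dEig1_ellipse (hS : IsFirstZero S) :
    ∀ᶠ t in 𝓝[>] 0, 4 * S < dEig1 (ellipse t) := by
  filter_upwards [hS.eventually_ellipseProfile_pos] with t profile_pos
  refine lt_dEig1_of_pos_eigenfunction (isOpen_ellipse t) (nonempty_ellipse t)
    (isBounded_ellipse t) contDiff_ellipseEigenfunction (fun x hx ↦ ?_) (by linarith [hS.pos])
    fun x _ ↦ laplacian_ellipseEigenfunction S t x
  rcases eq_or_ne x 0 with rfl | x_ne
  · simp [ellipseEigenfunction, radialBessel, quadrupole, besselClifford_zero_right]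
  have norm_pos : 0 < ‖x‖ ^ 2 := by positivity
  have x_mem : cosh t * ‖x‖ ^ 2 - sinh t * quadrupole x ≤ 1 := closure_ellipse_subset t hx
  have S_pos := hS.pos
  rw [ellipseEigenfunction_eq x_ne]
  refine profile_pos _ ?_ _ (by positivity) ?_
  · rw [mem_Icc, ← abs_le, abs_div, abs_of_pos norm_pos]
    exact div_le_one_of_le₀ (abs_quadrupole_le x) norm_pos.le
  · calc S * ‖x‖ ^ 2 * (cosh t - quadrupole x / ‖x‖ ^ 2 * sinh t)
        = S * (cosh t * ‖x‖ ^ 2 - sinh t * quadrupole x) := by field_simp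
      _ ≤ S := mul_le_of_le_one_right S_pos.le x_mem

end EllipseEigenfunction

section InnerCutoff

open scoped ContDiff

lemma deriv_smoothTransition_eq_zero {s : ℝ} (hs : s ∉ Icc 0 1) : deriv smoothTransition s = 0 := by
  rcases not_and_or.1 hs with neg | gt_one
  · have : smoothTransition =ᶠ[𝓝 s] fun _ ↦ 0 := by
      filter_upwards [Iio_mem_nhds (not_le.1 neg)] with r hr
      exact smoothTransition.zero_of_nonpos (le_of_lt hr)
    simp [this.deriv_eq]
  · have : smoothTransition =ᶠ[𝓝 s] fun _ ↦ 1 := by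
      filter_upwards [Ioi_mem_nhds (not_le.1 gt_one)] with r hr
      exact smoothTransition.one_of_one_le (le_of_lt hr)
    simp [this.deriv_eq]

lemma exists_mul_deriv_smoothTransition_sq_le :
    ∃ C, ∀ r, (r * deriv smoothTransition (r - 1)) ^ 2 ≤ C := by
  have cont : Continuous fun r ↦ r * deriv smoothTransition (r - 1) :=
    continuous_id.mul ((smoothTransition.contDiff.continuous_deriv le_rfl).comp
      (continuous_sub_right 1))
  have supp : HasCompactSupport fun r ↦ r * deriv smoothTransition (r - 1) :=
    .intro (isCompact_Icc (a := 1) (b := 2)) fun r hr ↦ by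
      rw [deriv_smoothTransition_eq_zero, mul_zero]
      exact fun h ↦ hr ⟨by linarith [h.1], by linarith [h.2]⟩
  obtain ⟨C, hC⟩ := supp.exists_bound_of_continuous cont
  exact ⟨C ^ 2, fun r ↦ sq_le_sq' (neg_le_of_abs_le (hC r)) (le_of_abs_le (hC r))⟩

variable {E : Type*}

/-- For a function `w` that is positive on `Ω` and vanishes on its boundary, a smooth cutoff
function which is `1` on `{x ∈ Ω | 2 * ε ≤ w x}` and `0` off `{x ∈ Ω | ε ≤ w x}`. -/
def innerCutoff (Ω : Set E) (w : E → ℝ) (ε : ℝ) : E → ℝ :=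
  Ω.indicator fun x ↦ smoothTransition (w x / ε - 1)

variable {Ω : Set E} {w : E → ℝ} {ε : ℝ} {x : E}

lemma innerCutoff_of_mem (hx : x ∈ Ω) : innerCutoff Ω w ε x = smoothTransition (w x / ε - 1) :=
  indicator_of_mem hx _

lemma innerCutoff_eq_one (hε : 0 < ε) (hx : x ∈ Ω) (hεw : 2 * ε ≤ w x) :
    innerCutoff Ω w ε x = 1 := by
  rw [innerCutoff_of_mem hx]
  refine smoothTransition.one_of_one_le ?_
  rw [le_sub_iff_add_le, le_div_iff₀ hε]
  linarith

lemma eventually_innerCutoff_eq_one (hx : x ∈ Ω) (hpos : 0 < w x) :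
    ∀ᶠ ε in 𝓝[>] 0, innerCutoff Ω w ε x = 1 := by
  filter_upwards [Ioo_mem_nhdsGT (half_pos hpos)] with ε hε
  exact innerCutoff_eq_one hε.1 hx (by linarith [hε.2])

lemma tsupport_innerCutoff_subset [TopologicalSpace E] (hε : 0 < ε)
    (hw : Continuous w) (hzero : ∀ x ∈ frontier Ω, w x = 0) : tsupport (innerCutoff Ω w ε) ⊆ Ω := by
  have : tsupport (innerCutoff Ω w ε) ⊆ closure Ω ∩ {x | ε ≤ w x} := by
    refine closure_minimal (fun x hx ↦ ?_)
      (isClosed_closure.inter (isClosed_le continuous_const hw))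
    have hxΩ : x ∈ Ω := by_contra fun h ↦ hx (indicator_of_notMem h _)
    refine ⟨subset_closure hxΩ, le_of_not_gt fun (hlt : w x < ε) ↦ hx ?_⟩
    rw [innerCutoff_of_mem hxΩ]
    exact smoothTransition.zero_of_nonpos (sub_nonpos.2 ((div_le_one hε).2 hlt.le))
  intro x hx
  by_contra hxΩ
  have hεw : ε ≤ w x := (this hx).2
  rw [hzero x ⟨(this hx).1, fun h ↦ hxΩ (interior_subset h)⟩] at hεw
  exact hεw.not_gt hε

lemma innerCutoff_eventuallyEq [TopologicalSpace E] (hΩ : IsOpen Ω) (hx : x ∈ Ω) :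
    innerCutoff Ω w ε =ᶠ[𝓝 x] fun x ↦ smoothTransition (w x / ε - 1) :=
  eventually_of_mem (hΩ.mem_nhds hx) fun _ ↦ innerCutoff_of_mem

lemma tendsto_integral_mul_innerCutoff_sq [MetricSpace E] [ProperSpace E] [MeasurableSpace E]
    [BorelSpace E] {μ : Measure E} [IsFiniteMeasureOnCompacts μ] (hΩ : IsOpen Ω)
    (hbdd : Bornology.IsBounded Ω) (hw : Continuous w) (hpos : ∀ x ∈ Ω, 0 < w x) :
    Tendsto (fun ε ↦ ∫ x, (w x * innerCutoff Ω w ε x) ^ 2 ∂μ) (𝓝[>] 0)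
      (𝓝 (∫ x in Ω, w x ^ 2 ∂μ)) := by
  rw [← integral_indicator hΩ.measurableSet]
  refine tendsto_integral_filter_of_dominated_convergence (Ω.indicator fun x ↦ w x ^ 2) ?_ ?_ ?_ ?_
  · refine .of_forall fun ε ↦ ((hw.measurable.mul ?_).pow_const 2).aestronglyMeasurable
    exact (smoothTransition.continuous.comp ((hw.div_const ε).sub continuous_const)).measurable
      |>.indicator hΩ.measurableSet
  · refine .of_forall fun ε ↦ .of_forall fun x ↦ ?_
    rw [norm_of_nonneg (sq_nonneg _)]
    by_cases hx : x ∈ Ω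
    · rw [innerCutoff_of_mem hx, indicator_of_mem hx, mul_pow]
      exact mul_le_of_le_one_right (sq_nonneg _)
        (pow_le_one₀ (smoothTransition.nonneg _) (smoothTransition.le_one _))
    · simp [innerCutoff, hx]
  · exact (integrable_indicator_iff hΩ.measurableSet).2
      (integrableOn_of_isBounded (hw.pow 2) hbdd)
  · refine .of_forall fun x ↦ tendsto_const_nhds.congr' ?_
    by_cases hx : x ∈ Ω
    · filter_upwards [eventually_innerCutoff_eq_one hx (hpos x hx)] with ε hε
      simp [hε, hx]
    · simp [innerCutoff, hx]

variable [NormedAddCommGroup E] [NormedSpace ℝ E]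

lemma contDiff_innerCutoff (hΩ : IsOpen Ω) (hε : 0 < ε) {n : ℕ∞} (hw : ContDiff ℝ n w)
    (hzero : ∀ x ∈ frontier Ω, w x = 0) : ContDiff ℝ n (innerCutoff Ω w ε) := by
  refine contDiff_iff_contDiffAt.2 fun x ↦ ?_
  by_cases hx : x ∉ tsupport (innerCutoff Ω w ε)
  · exact contDiffAt_const.congr_of_eventuallyEq (notMem_tsupport_iff_eventuallyEq.1 hx)
  have hxΩ := tsupport_innerCutoff_subset hε hw.continuous hzero (not_not.1 hx)
  exact (smoothTransition.contDiff.comp ((hw.div_const ε).sub contDiff_const)).contDiffAt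
    |>.congr_of_eventuallyEq (innerCutoff_eventuallyEq hΩ hxΩ)

lemma sq_mul_norm_fderiv_innerCutoff_sq (hΩ : IsOpen Ω) (hw : ContDiff ℝ 1 w) (hx : x ∈ Ω) :
    w x ^ 2 * ‖fderiv ℝ (innerCutoff Ω w ε) x‖ ^ 2 =
      (w x / ε * deriv smoothTransition (w x / ε - 1)) ^ 2 * ‖fderiv ℝ w x‖ ^ 2 := by
  have inner_deriv : HasFDerivAt (fun x ↦ w x / ε - 1) (ε⁻¹ • fderiv ℝ w x) x := by
    simpa only [div_eq_inv_mul] using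
      ((hw.differentiable one_ne_zero x).hasFDerivAt.const_mul ε⁻¹).sub_const 1
  have outer_deriv :=
    (smoothTransition.contDiff.differentiable one_ne_zero (w x / ε - 1)).hasDerivAt
  have comp_deriv := outer_deriv.comp_hasFDerivAt x inner_deriv
  have chain_rule : fderiv ℝ (fun x ↦ smoothTransition (w x / ε - 1)) x =
      deriv smoothTransition (w x / ε - 1) • ε⁻¹ • fderiv ℝ w x :=
    comp_deriv.fderiv
  rw [(innerCutoff_eventuallyEq hΩ hx).fderiv_eq, chain_rule, norm_smul, norm_smul, norm_eq_abs,
    norm_eq_abs, mul_pow, mul_pow, sq_abs, sq_abs]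
  ring

lemma fderiv_innerCutoff_of_notMem (hε : 0 < ε) (hw : Continuous w)
    (hzero : ∀ x ∈ frontier Ω, w x = 0) (hx : x ∉ Ω) : fderiv ℝ (innerCutoff Ω w ε) x = 0 :=
  fderiv_of_notMem_tsupport ℝ fun h ↦ hx (tsupport_innerCutoff_subset hε hw hzero h)

lemma tendsto_integral_sq_mul_norm_fderiv_innerCutoff_sq [ProperSpace E]
    [MeasurableSpace E] [BorelSpace E] {μ : Measure E} [IsFiniteMeasureOnCompacts μ]
    (hΩ : IsOpen Ω) (hbdd : Bornology.IsBounded Ω) (hw : ContDiff ℝ 1 w) (hpos : ∀ x ∈ Ω, 0 < w x)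
    (hzero : ∀ x ∈ frontier Ω, w x = 0) :
    Tendsto (fun ε ↦ ∫ x, w x ^ 2 * ‖fderiv ℝ (innerCutoff Ω w ε) x‖ ^ 2 ∂μ) (𝓝[>] 0)
      (𝓝 0) := by
  obtain ⟨C, hC⟩ := exists_mul_deriv_smoothTransition_sq_le
  suffices Tendsto (fun ε ↦ ∫ x, w x ^ 2 * ‖fderiv ℝ (innerCutoff Ω w ε) x‖ ^ 2 ∂μ) (𝓝[>] 0)
      (𝓝 (∫ _, 0 ∂μ)) by rwa [integral_zero] at this
  refine tendsto_integral_filter_of_dominated_convergence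
    (Ω.indicator fun x ↦ C * ‖fderiv ℝ w x‖ ^ 2) ?_ ?_ ?_ ?_
  · filter_upwards [self_mem_nhdsWithin] with ε hε
    have := (contDiff_innerCutoff hΩ hε (n := 1) hw hzero).continuous_fderiv one_ne_zero
    exact ((hw.continuous.pow 2).mul (this.norm.pow 2)).aestronglyMeasurable
  · filter_upwards [self_mem_nhdsWithin] with ε hε
    refine .of_forall fun x ↦ ?_
    rw [norm_of_nonneg (by positivity)]
    by_cases hx : x ∈ Ω
    · rw [sq_mul_norm_fderiv_innerCutoff_sq hΩ hw hx, indicator_of_mem hx]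
      exact mul_le_mul_of_nonneg_right (hC _) (sq_nonneg _)
    · simp [fderiv_innerCutoff_of_notMem hε hw.continuous hzero hx, hx]
  · refine (integrable_indicator_iff hΩ.measurableSet).2 (integrableOn_of_isBounded ?_ hbdd)
    exact continuous_const.mul ((hw.continuous_fderiv one_ne_zero).norm.pow 2)
  · refine .of_forall fun x ↦ tendsto_const_nhds.congr' ?_
    by_cases hx : x ∈ Ω
    · filter_upwards [Ioo_mem_nhdsGT (half_pos (hpos x hx))] with ε hε
      rw [sq_mul_norm_fderiv_innerCutoff_sq hΩ hw hx, deriv_smoothTransition_eq_zero]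
      · simp
      · refine fun h ↦ hε.2.not_ge ?_
        linarith [(div_le_iff₀ hε.1).1 (sub_le_iff_le_add.1 h.2)]
    · filter_upwards [self_mem_nhdsWithin] with ε hε
      simp [fderiv_innerCutoff_of_notMem hε hw.continuous hzero hx]

end InnerCutoff

section DirichletUpperBound

open scoped ContDiff

variable {Ω : Set E2} {w : E2 → ℝ} {Λ : ℝ}

lemma dEig1_mul_integral_mul_innerCutoff_sq_le {ε : ℝ} (hΩ : IsOpen Ω)
    (hbdd : Bornology.IsBounded Ω) (hε : 0 < ε) (hw : ContDiff ℝ ∞ w)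
    (hzero : ∀ x ∈ frontier Ω, w x = 0) (hΛ : ∀ x ∈ Ω, Δ w x = -Λ * w x) :
    dEig1 Ω * ∫ x, (w x * innerCutoff Ω w ε x) ^ 2 ≤
      (∫ x, w x ^ 2 * ‖fderiv ℝ (innerCutoff Ω w ε) x‖ ^ 2) +
        Λ * ∫ x, (w x * innerCutoff Ω w ε x) ^ 2 := by
  set φ := innerCutoff Ω w ε
  have φ_sub : tsupport φ ⊆ Ω := tsupport_innerCutoff_subset hε hw.continuous hzero
  have hφ : ContDiff ℝ ∞ φ := contDiff_innerCutoff hΩ hε hw hzero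
  have φ_supp : HasCompactSupport φ := hbdd.isCompact_closure.of_isClosed_subset
    (isClosed_tsupport φ) (φ_sub.trans subset_closure)
  have isTest : IsDirichletTest Ω fun x ↦ w x * φ x :=
    ⟨hw.mul hφ, φ_supp.mul_left, tsupport_mul_subset_right.trans φ_sub⟩
  refine (dEig1_mul_integral_sq_le isTest).trans_eq ?_
  rw [integral_norm_fderiv_mul_sq (contDiff_infty.1 hw 2) (contDiff_infty.1 hφ 1) φ_supp,
    sub_eq_add_neg, ← integral_neg, ← integral_const_mul]
  congr 2 with x
  by_cases hx : x ∈ Ω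
  · rw [hΛ x hx]; ring
  · simp [φ, innerCutoff, hx]

lemma dEig1_le_of_pos_eigenfunction (hΩ : IsOpen Ω) (hne : Ω.Nonempty)
    (hbdd : Bornology.IsBounded Ω) (hw : ContDiff ℝ ∞ w) (hpos : ∀ x ∈ Ω, 0 < w x)
    (hzero : ∀ x ∈ frontier Ω, w x = 0) (hΛ : ∀ x ∈ Ω, Δ w x = -Λ * w x) : dEig1 Ω ≤ Λ := by
  have mass_pos : 0 < ∫ x in Ω, w x ^ 2 := by
    rw [setIntegral_pos_iff_support_of_nonneg_ae (.of_forall fun _ ↦ sq_nonneg _)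
      (integrableOn_of_isBounded (hw.continuous.pow 2) hbdd)]
    refine (hΩ.measure_pos volume hne).trans_le (measure_mono fun x hx ↦ ⟨?_, hx⟩)
    simpa using (hpos x hx).ne'
  have mass_tendsto :=
    tendsto_integral_mul_innerCutoff_sq (μ := volume) hΩ hbdd hw.continuous hpos
  have error_tendsto := tendsto_integral_sq_mul_norm_fderiv_innerCutoff_sq (μ := volume)
    hΩ hbdd (contDiff_infty.1 hw 1) hpos hzero
  have in_limit : dEig1 Ω * ∫ x in Ω, w x ^ 2 ≤ 0 + Λ * ∫ x in Ω, w x ^ 2 := by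
    refine le_of_tendsto_of_tendsto (mass_tendsto.const_mul _)
      (error_tendsto.add (mass_tendsto.const_mul Λ)) ?_
    filter_upwards [self_mem_nhdsWithin] with ε hε
    exact dEig1_mul_integral_mul_innerCutoff_sq_le hΩ hbdd hε hw hzero hΛ
  rw [zero_add] at in_limit
  exact le_of_mul_le_mul_right in_limit mass_pos

lemma IsFirstZero.dEig1_unitDisc_le {S : ℝ} (hS : IsFirstZero S) : dEig1 unitDisc ≤ 4 * S := by
  refine dEig1_le_of_pos_eigenfunction (w := radialBessel 0 S) Metric.isOpen_ball
    (Metric.nonempty_ball.2 one_pos) Metric.isBounded_ball (contDiff_radialBessel 0 S)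
    (fun x hx ↦ ?_) (fun x hx ↦ ?_) fun x _ ↦ laplacian_radialBessel_zero S x
  · have : ‖x‖ < 1 := mem_ball_zero_iff.1 hx
    exact hS.pos_of_lt _ (by have := hS.pos; positivity)
      (mul_lt_of_lt_one_right hS.pos (by nlinarith [norm_nonneg x]))
  · rw [unitDisc, frontier_ball _ one_ne_zero, mem_sphere_zero_iff_norm] at hx
    rw [radialBessel, hx, one_pow, mul_one, hS.eq_zero]

end DirichletUpperBound

section PartialDeriv

variable {u : E2 → ℝ} {x : E2}

/-- The `i`-th partial derivative of a function on the plane. -/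
def partialDeriv (i : Fin 2) (u : E2 → ℝ) : E2 → ℝ := dirDeriv (EuclideanSpace.single i 1) u

lemma continuous_partialDeriv (i : Fin 2) (hu : ContDiff ℝ 1 u) : Continuous (partialDeriv i u) :=
  continuous_dirDeriv hu

lemma norm_fderiv_sq_eq_partialDeriv (u : E2 → ℝ) (x : E2) :
    ‖fderiv ℝ u x‖ ^ 2 = partialDeriv 0 u x ^ 2 + partialDeriv 1 u x ^ 2 := by
  simp [norm_fderiv_sq_eq_sum (EuclideanSpace.basisFun (Fin 2) ℝ), partialDeriv]

lemma dirDeriv_comp_continuousLinearMap (L : E2 →L[ℝ] E2) (v : E2)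
    (hu : DifferentiableAt ℝ u (L x)) :
    dirDeriv v (fun x ↦ u (L x)) x = dirDeriv (L v) u (L x) := by
  have := hu.hasFDerivAt.comp x L.hasFDerivAt
  rw [dirDeriv, show fderiv ℝ (fun x ↦ u (L x)) x = _ from this.fderiv, dirDeriv,
    ContinuousLinearMap.comp_apply]

lemma norm_fderiv_comp_stretch_sq (t : ℝ) (hu : DifferentiableAt ℝ u (stretch t x)) :
    ‖fderiv ℝ (fun x ↦ u (stretch t x)) x‖ ^ 2 =
      exp t * partialDeriv 0 u (stretch t x) ^ 2 +
        exp (-t) * partialDeriv 1 u (stretch t x) ^ 2 := by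
  have stretch_single_zero : stretch t (EuclideanSpace.single 0 1) =
      exp (t / 2) • EuclideanSpace.single 0 1 := by
    ext i; fin_cases i <;> simp [stretch_apply_zero, stretch_apply_one]
  have stretch_single_one : stretch t (EuclideanSpace.single 1 1) =
      exp (-t / 2) • EuclideanSpace.single 1 1 := by
    ext i; fin_cases i <;> simp [stretch_apply_zero, stretch_apply_one, neg_div]
  have chain_rule (i : Fin 2) : partialDeriv i (fun x ↦ u (stretch t x)) x =
      dirDeriv (stretch t (EuclideanSpace.single i 1)) u (stretch t x) :=
    dirDeriv_comp_continuousLinearMap (stretch t : E2 →L[ℝ] E2) _ hu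
  simp only [norm_fderiv_sq_eq_partialDeriv, chain_rule, stretch_single_zero, stretch_single_one]
  simp only [dirDeriv, partialDeriv, map_smul, smul_eq_mul, mul_pow, exp_half_sq]

/-- The reflection of the plane that exchanges the two coordinates. -/
def coordSwap : E2 ≃ₗᵢ[ℝ] E2 := LinearIsometryEquiv.piLpCongrLeft 2 ℝ ℝ (Equiv.swap 0 1)

lemma partialDeriv_comp_coordSwap (i : Fin 2) (hu : DifferentiableAt ℝ u (coordSwap x)) :
    partialDeriv i (fun x ↦ u (coordSwap x)) x =
      partialDeriv (Equiv.swap 0 1 i) u (coordSwap x) := by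
  have coordSwap_single : coordSwap (EuclideanSpace.single i 1) =
      EuclideanSpace.single (Equiv.swap 0 1 i) 1 :=
    LinearIsometryEquiv.piLpCongrLeft_single _ _ _
  rw [partialDeriv, partialDeriv, ← coordSwap_single]
  exact dirDeriv_comp_continuousLinearMap (coordSwap.toContinuousLinearEquiv : E2 →L[ℝ] E2) _ hu

end PartialDeriv

section DirichletEllipse

variable {Ω : Set E2} {u : E2 → ℝ}

lemma IsDirichletTest.comp (hu : IsDirichletTest Ω u) (L : E2 ≃L[ℝ] E2) :
    IsDirichletTest (L ⁻¹' Ω) fun x ↦ u (L x) where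
  contDiff := hu.contDiff.comp L.contDiff
  hasCompactSupport := hu.hasCompactSupport.comp_homeomorph L.toHomeomorph
  tsupport_subset := by
    have := tsupport_comp_eq_preimage u L.toHomeomorph
    exact this.trans_subset (preimage_mono hu.tsupport_subset)

lemma IsDirichletTest.integrable_partialDeriv_sq (hu : IsDirichletTest Ω u) (i : Fin 2) :
    Integrable fun x ↦ partialDeriv i u x ^ 2 :=
  ((continuous_partialDeriv i hu.contDiff_one).pow 2).integrable_of_hasCompactSupport
    (hasCompactSupport_sq (hasCompactSupport_dirDeriv hu.hasCompactSupport))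

lemma dEig1_preimage_stretch_mul_integral_sq_le (hu : IsDirichletTest Ω u) (t : ℝ) :
    dEig1 (stretch t ⁻¹' Ω) * ∫ x, u x ^ 2 ≤
      exp t * (∫ x, partialDeriv 0 u x ^ 2) + exp (-t) * ∫ x, partialDeriv 1 u x ^ 2 := by
  have integral_comp (f : E2 → ℝ) : ∫ x, f (stretch t x) = ∫ x, f x :=
    (measurePreserving_stretch t).integral_comp (stretch t).toHomeomorph.measurableEmbedding f
  have diff := hu.contDiff_one.differentiable one_ne_zero
  calc dEig1 (stretch t ⁻¹' Ω) * ∫ x, u x ^ 2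
      = dEig1 (stretch t ⁻¹' Ω) * ∫ x, u (stretch t x) ^ 2 := by
        rw [integral_comp fun x ↦ u x ^ 2]
    _ ≤ ∫ x, ‖fderiv ℝ (fun x ↦ u (stretch t x)) x‖ ^ 2 :=
        dEig1_mul_integral_sq_le (hu.comp (stretch t))
    _ = ∫ x, (exp t * partialDeriv 0 u x ^ 2 + exp (-t) * partialDeriv 1 u x ^ 2) := by
        simp only [norm_fderiv_comp_stretch_sq t (diff _)]
        exact integral_comp fun x ↦
          exp t * partialDeriv 0 u x ^ 2 + exp (-t) * partialDeriv 1 u x ^ 2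
    _ = _ := by
        rw [integral_add ((hu.integrable_partialDeriv_sq 0).const_mul _)
          ((hu.integrable_partialDeriv_sq 1).const_mul _), integral_const_mul, integral_const_mul]

lemma preimage_coordSwap_unitDisc : coordSwap ⁻¹' unitDisc = unitDisc := by
  ext x
  simp [unitDisc]

-- The first-order terms in `t` cancel when the estimate for a test function is averaged with the
-- one for its reflection.
lemma dEig1_ellipse_le (t : ℝ) : dEig1 (ellipse t) ≤ cosh t * dEig1 unitDisc := by
  rw [← inv_mul_le_iff₀ (cosh_pos t)]
  refine le_dEig1 Metric.isOpen_ball (Metric.nonempty_ball.2 one_pos) fun u hu ↦ ?_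
  have integral_comp (f : E2 → ℝ) : ∫ x, f (coordSwap x) = ∫ x, f x :=
    coordSwap.measurePreserving.integral_comp coordSwap.toHomeomorph.measurableEmbedding f
  have diff := hu.contDiff_one.differentiable one_ne_zero
  have hu_swap : IsDirichletTest unitDisc fun x ↦ u (coordSwap x) := by
    have := hu.comp coordSwap.toContinuousLinearEquiv
    rwa [show coordSwap.toContinuousLinearEquiv ⁻¹' unitDisc = unitDisc from
      preimage_coordSwap_unitDisc] at this
  have bound := dEig1_preimage_stretch_mul_integral_sq_le hu (-t)
  have bound_swap := dEig1_preimage_stretch_mul_integral_sq_le hu_swap (-t)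
  simp only [partialDeriv_comp_coordSwap _ (diff _), Equiv.swap_apply_left,
    Equiv.swap_apply_right] at bound_swap
  rw [integral_comp fun x ↦ u x ^ 2, integral_comp fun x ↦ partialDeriv 0 u x ^ 2,
    integral_comp fun x ↦ partialDeriv 1 u x ^ 2] at bound_swap
  rw [← ellipse_eq_preimage, neg_neg] at bound bound_swap
  simp only [norm_fderiv_sq_eq_partialDeriv]
  rw [integral_add (hu.integrable_partialDeriv_sq 0) (hu.integrable_partialDeriv_sq 1), mul_assoc,
    inv_mul_le_iff₀ (cosh_pos t), cosh_eq]
  linarith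

end DirichletEllipse

section Neumann

open scoped ContDiff

variable {Ω : Set E2} {u : E2 → ℝ} {Λ : ℝ}

/-- The test functions in the variational characterization of `nEig1 Ω`. -/
structure IsNeumannTest (Ω : Set E2) (u : E2 → ℝ) : Prop where
  contDiff : ContDiff ℝ ∞ u
  integral_eq_zero : ∫ x in Ω, u x = 0

lemma IsNeumannTest.contDiff_one (hu : IsNeumannTest Ω u) : ContDiff ℝ 1 u :=
  contDiff_infty.1 hu.contDiff 1

lemma nEig1_mul_integral_sq_le (hu : IsNeumannTest Ω u) :
    nEig1 Ω * ∫ x in Ω, u x ^ 2 ≤ ∫ x in Ω, ‖fderiv ℝ u x‖ ^ 2 := by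
  rcases eq_or_ne (∫ x in Ω, u x ^ 2) 0 with mass_zero | mass_ne
  · rw [mass_zero, mul_zero]
    positivity
  · refine (le_div_iff₀ (mass_ne.symm.lt_of_le (by positivity))).1 (csInf_le ⟨0, ?_⟩
      ⟨u, hu.contDiff, hu.integral_eq_zero, mass_ne, rfl⟩)
    rintro _ ⟨v, -, -, -, rfl⟩
    positivity

lemma exists_isNeumannTest_integral_sq_ne_zero (hΩ : IsOpen Ω) (hne : Ω.Nonempty)
    (hbdd : Bornology.IsBounded Ω) : ∃ u, IsNeumannTest Ω u ∧ ∫ x in Ω, u x ^ 2 ≠ 0 := by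
  set c := ⨍ x in Ω, x 0
  set u : E2 → ℝ := fun x ↦ x 0 - c with hu_def
  have hu : ContDiff ℝ ∞ u := (contDiff_coord 0).sub contDiff_const
  have : IsFiniteMeasure (volume.restrict Ω) := isFiniteMeasure_restrict.2 hbdd.measure_lt_top.ne
  refine ⟨u, ⟨hu, ?_⟩, fun mass_zero ↦ ?_⟩
  · exact integral_sub_average _ _
  · obtain ⟨x, hx⟩ := hne
    rw [setIntegral_eq_zero_iff_of_nonneg_ae (.of_forall fun _ ↦ sq_nonneg _)
      (integrableOn_of_isBounded (hu.continuous.pow 2) hbdd)] at mass_zero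
    have u_sq_eq_zero : EqOn (fun x ↦ u x ^ 2) 0 Ω := Measure.eqOn_open_of_ae_eq mass_zero hΩ
      (hu.continuous.pow 2).continuousOn continuousOn_const
    have u_eq_zero : u =ᶠ[𝓝 x] fun _ ↦ 0 :=
      eventually_of_mem (hΩ.mem_nhds hx) fun y hy ↦ pow_eq_zero_iff two_ne_zero |>.1
        (u_sq_eq_zero hy)
    have deriv_eq_one : partialDeriv 0 u x = 1 := by
      rw [partialDeriv, dirDeriv, hu_def, fderiv_sub_const]
      exact (dirDeriv_coord 0 _ x).trans (by simp)
    simp [partialDeriv, dirDeriv, u_eq_zero.fderiv_eq] at deriv_eq_one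

lemma le_nEig1 (hΩ : IsOpen Ω) (hne : Ω.Nonempty) (hbdd : Bornology.IsBounded Ω)
    (hΛ : ∀ u, IsNeumannTest Ω u → Λ * ∫ x in Ω, u x ^ 2 ≤ ∫ x in Ω, ‖fderiv ℝ u x‖ ^ 2) :
    Λ ≤ nEig1 Ω := by
  obtain ⟨u, hu, mass_ne⟩ := exists_isNeumannTest_integral_sq_ne_zero hΩ hne hbdd
  refine le_csInf ⟨_, u, hu.contDiff, hu.integral_eq_zero, mass_ne, rfl⟩ ?_
  rintro _ ⟨v, hv, v_mean, v_ne, rfl⟩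
  exact (le_div_iff₀ (v_ne.symm.lt_of_le (by positivity))).2 (hΛ v ⟨hv, v_mean⟩)

lemma setIntegral_comp_stretch (t : ℝ) (f : E2 → ℝ) (Ω : Set E2) :
    ∫ x in stretch t ⁻¹' Ω, f (stretch t x) = ∫ x in Ω, f x :=
  (measurePreserving_stretch t).setIntegral_preimage_emb
    (stretch t).toHomeomorph.measurableEmbedding f Ω

lemma nEig1_preimage_stretch_mul_integral_sq_le (hu : IsNeumannTest Ω u) (t : ℝ) :
    nEig1 (stretch t ⁻¹' Ω) * ∫ x in Ω, u x ^ 2 ≤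
      ∫ x in Ω, (exp t * partialDeriv 0 u x ^ 2 + exp (-t) * partialDeriv 1 u x ^ 2) := by
  have test : IsNeumannTest (stretch t ⁻¹' Ω) fun x ↦ u (stretch t x) :=
    ⟨hu.contDiff.comp (stretch t).contDiff,
      (setIntegral_comp_stretch t u Ω).trans hu.integral_eq_zero⟩
  have diff := hu.contDiff_one.differentiable one_ne_zero
  have bound := nEig1_mul_integral_sq_le test
  simp only [norm_fderiv_comp_stretch_sq t (diff _)] at bound
  rwa [setIntegral_comp_stretch t (fun x ↦ u x ^ 2), setIntegral_comp_stretch t fun x ↦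
    exp t * partialDeriv 0 u x ^ 2 + exp (-t) * partialDeriv 1 u x ^ 2] at bound

lemma exp_neg_mul_nEig1_unitDisc_le {t : ℝ} (ht : 0 ≤ t) :
    exp (-t) * nEig1 unitDisc ≤ nEig1 (ellipse t) := by
  refine le_nEig1 (isOpen_ellipse t) (nonempty_ellipse t) (isBounded_ellipse t) fun u hu ↦ ?_
  have preimage_ellipse : stretch t ⁻¹' ellipse t = unitDisc :=
    (stretch t).injective.preimage_image unitDisc
  have continuous_partial (i : Fin 2) := continuous_partialDeriv i hu.contDiff_one
  have exp_le : exp (-t) ≤ exp t := exp_le_exp.2 (by linarith)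
  rw [mul_assoc, exp_neg, inv_mul_le_iff₀ (exp_pos t)]
  calc nEig1 unitDisc * ∫ x in ellipse t, u x ^ 2
      ≤ ∫ x in ellipse t, (exp t * partialDeriv 0 u x ^ 2 + exp (-t) * partialDeriv 1 u x ^ 2) := by
        simpa only [preimage_ellipse] using nEig1_preimage_stretch_mul_integral_sq_le hu t
    _ ≤ ∫ x in ellipse t, exp t * ‖fderiv ℝ u x‖ ^ 2 := by
        refine integral_mono (integrableOn_of_isBounded (by fun_prop) (isBounded_ellipse t))
          (integrableOn_of_isBounded ?_ (isBounded_ellipse t)) fun x ↦ ?_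
        · exact continuous_const.mul ((hu.contDiff_one.continuous_fderiv one_ne_zero).norm.pow 2)
        · simp only [norm_fderiv_sq_eq_partialDeriv, mul_add]
          gcongr
    _ = exp t * ∫ x in ellipse t, ‖fderiv ℝ u x‖ ^ 2 := integral_const_mul _ _

end Neumann

section PolarCoordinates

variable {u : E2 → ℝ}

/-- The unit vector of the plane at angle `θ`, so that `r • unitVec θ` is the point with polar
coordinates `(r, θ)` and `unitVec (θ + π / 2)` is the tangential direction there. -/
def unitVec (θ : ℝ) : E2 := !₂[cos θ, sin θ]

lemma norm_unitVec (θ : ℝ) : ‖unitVec θ‖ = 1 := by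
  simp [unitVec, EuclideanSpace.norm_eq]

lemma norm_smul_unitVec_sq (r θ : ℝ) : ‖r • unitVec θ‖ ^ 2 = r ^ 2 := by
  simp [norm_smul, norm_unitVec]

@[fun_prop]
lemma continuous_unitVec : Continuous unitVec :=
  (PiLp.continuous_toLp 2 _).comp <| continuous_pi fun i ↦ by
    fin_cases i
    exacts [continuous_cos, continuous_sin]

lemma periodic_unitVec : Function.Periodic unitVec (2 * π) := fun θ ↦ by simp [unitVec]

lemma hasDerivAt_unitVec (θ : ℝ) : HasDerivAt unitVec (unitVec (θ + π / 2)) θ := by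
  have hcoord : HasDerivAt (fun θ ↦ ![cos θ, sin θ]) ![-sin θ, cos θ] θ :=
    hasDerivAt_pi.2 fun i ↦ by
      fin_cases i
      exacts [hasDerivAt_cos θ, hasDerivAt_sin θ]
  have := (PiLp.continuousLinearEquiv 2 ℝ fun _ : Fin 2 ↦ ℝ).symm.hasFDerivAt.comp_hasDerivAt
    θ hcoord
  exact this.congr_deriv (by simp [unitVec, cos_add_pi_div_two, sin_add_pi_div_two])

lemma integral_eq_integral_prod (f : E2 → ℝ) : ∫ x, f x = ∫ p : ℝ × ℝ, f !₂[p.1, p.2] := by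
  have toLp := (PiLp.volume_preserving_toLp (Fin 2)).integral_comp
    (MeasurableEquiv.toLp 2 (Fin 2 → ℝ)).measurableEmbedding f
  have finTwo := ((volume_preserving_finTwoArrow ℝ).symm _).integral_comp
    MeasurableEquiv.finTwoArrow.symm.measurableEmbedding fun y ↦ f (WithLp.toLp 2 y)
  exact (finTwo.trans toLp).symm

lemma integral_eq_integral_polar (f : E2 → ℝ) :
    ∫ x, f x = ∫ p in Ioi (0 : ℝ) ×ˢ Ioo (-π) π, p.1 * f (p.1 • unitVec p.2) := by
  have hpolar (p : ℝ × ℝ) : (!₂[(polarCoord.symm p).1, (polarCoord.symm p).2] : E2) =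
      p.1 • unitVec p.2 := by
    ext i; fin_cases i <;> simp [unitVec]
  rw [integral_eq_integral_prod, ← integral_comp_polarCoord_symm]
  simp only [hpolar, smul_eq_mul, polarCoord_target]

lemma setIntegral_unitDisc_eq_polar {f : E2 → ℝ} (hf : Continuous f) :
    ∫ x in unitDisc, f x = ∫ r in (0 : ℝ)..1, r * ∫ θ in (-π)..π, f (r • unitVec θ) := by
  have indicator_polar : ∀ p ∈ Ioi (0 : ℝ) ×ˢ Ioo (-π) π,
      p.1 * unitDisc.indicator f (p.1 • unitVec p.2) =
        (Iio (1 : ℝ) ×ˢ univ).indicator (fun p ↦ p.1 * f (p.1 • unitVec p.2)) p := by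
    rintro ⟨r, θ⟩ ⟨hr, -⟩
    have mem_iff : r • unitVec θ ∈ unitDisc ↔ r < 1 := by
      rw [unitDisc, mem_ball_zero_iff, norm_smul, norm_unitVec, mul_one,
        norm_of_nonneg (mem_Ioi.1 hr).le]
    by_cases h : r < 1 <;> simp [indicator, mem_iff, h]
  have integrable_polar : IntegrableOn (fun p : ℝ × ℝ ↦ p.1 * f (p.1 • unitVec p.2))
      (Ioo 0 1 ×ˢ Ioo (-π) π) :=
    integrableOn_of_isBounded (by fun_prop) ((Metric.isBounded_Ioo _ _).prod
      (Metric.isBounded_Ioo _ _))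
  rw [← integral_indicator (show MeasurableSet unitDisc from measurableSet_ball),
    integral_eq_integral_polar,
    setIntegral_congr_fun (measurableSet_Ioi.prod measurableSet_Ioo) indicator_polar,
    setIntegral_indicator (measurableSet_Iio.prod MeasurableSet.univ), prod_inter_prod,
    inter_univ, Ioi_inter_Iio, Measure.volume_eq_prod, setIntegral_prod _ integrable_polar,
    intervalIntegral.integral_of_le zero_le_one, integral_Ioc_eq_integral_Ioo]
  simp only [intervalIntegral.integral_of_le (neg_le_self pi_nonneg),
    integral_Ioc_eq_integral_Ioo, integral_const_mul]

/-- The derivative of `u` along the radius, at the point with polar coordinates `(r, θ)`. -/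
def radialDeriv (u : E2 → ℝ) (r θ : ℝ) : ℝ := dirDeriv (unitVec θ) u (r • unitVec θ)

/-- The derivative of `u` in the unit direction tangent to the circle of radius `r`, at the point
with polar coordinates `(r, θ)`; it is `1 / r` times the derivative in `θ`. -/
def tangentialDeriv (u : E2 → ℝ) (r θ : ℝ) : ℝ := dirDeriv (unitVec (θ + π / 2)) u (r • unitVec θ)

lemma hasDerivAt_radialDeriv (hu : ContDiff ℝ 1 u) (r θ : ℝ) :
    HasDerivAt (fun r : ℝ ↦ u (r • unitVec θ)) (radialDeriv u r θ) r := by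
  have hray : HasDerivAt (fun r : ℝ ↦ r • unitVec θ) (unitVec θ) r := by
    simpa using (hasDerivAt_id r).smul_const (unitVec θ)
  exact (hu.differentiable one_ne_zero _).hasFDerivAt.comp_hasDerivAt r hray

lemma hasDerivAt_tangentialDeriv (hu : ContDiff ℝ 1 u) (r θ : ℝ) :
    HasDerivAt (fun θ ↦ u (r • unitVec θ)) (r * tangentialDeriv u r θ) θ := by
  have := (hu.differentiable one_ne_zero _).hasFDerivAt.comp_hasDerivAt θ
    ((hasDerivAt_unitVec θ).const_smul r)
  exact this.congr_deriv (by simp [tangentialDeriv, dirDeriv])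

lemma dirDeriv_unitVec (u : E2 → ℝ) (θ : ℝ) (x : E2) :
    dirDeriv (unitVec θ) u x = cos θ * partialDeriv 0 u x + sin θ * partialDeriv 1 u x := by
  have : unitVec θ = cos θ • EuclideanSpace.single 0 1 + sin θ • EuclideanSpace.single 1 1 := by
    ext i; fin_cases i <;> simp [unitVec]
  simp [dirDeriv, partialDeriv, this]

lemma norm_fderiv_sq_eq_radialDeriv_add_tangentialDeriv (u : E2 → ℝ) (r θ : ℝ) :
    ‖fderiv ℝ u (r • unitVec θ)‖ ^ 2 = radialDeriv u r θ ^ 2 + tangentialDeriv u r θ ^ 2 := by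
  simp only [norm_fderiv_sq_eq_partialDeriv, radialDeriv, tangentialDeriv, dirDeriv_unitVec,
    cos_add_pi_div_two, sin_add_pi_div_two]
  linear_combination
    (-(partialDeriv 0 u (r • unitVec θ) ^ 2 + partialDeriv 1 u (r • unitVec θ) ^ 2)) *
      sin_sq_add_cos_sq θ

lemma continuous_radialDeriv (hu : ContDiff ℝ 1 u) :
    Continuous (Function.uncurry (radialDeriv u)) := by
  have := continuous_partialDeriv 0 hu
  have := continuous_partialDeriv 1 hu
  simp only [Function.uncurry_def, radialDeriv, dirDeriv_unitVec]
  fun_prop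

lemma continuous_tangentialDeriv (hu : ContDiff ℝ 1 u) :
    Continuous (Function.uncurry (tangentialDeriv u)) := by
  have := continuous_partialDeriv 0 hu
  have := continuous_partialDeriv 1 hu
  simp only [Function.uncurry_def, tangentialDeriv, dirDeriv_unitVec]
  fun_prop

lemma periodic_tangentialDeriv (u : E2 → ℝ) (r : ℝ) :
    Function.Periodic (tangentialDeriv u r) (2 * π) := fun θ ↦ by
  simp only [tangentialDeriv, periodic_unitVec θ, add_right_comm θ, periodic_unitVec (θ + π / 2)]

end PolarCoordinates

section Riccati

variable {a b : ℝ} {ρ q q' A M B G : ℝ → ℝ}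

-- Integrate `(A q)'`, bounded by the form at `(ρ, -q)`. With `A = g ^ 2`, `M = g g'`, `B = g' ^ 2`
-- this is Picone's inequality, `q` being the logarithmic derivative (times `ρ`) of the comparison
-- function.
lemma integral_add_nonneg_of_riccati (hab : a ≤ b)
    (hA : ∀ r, HasDerivAt A (2 * M r) r) (hM : Continuous M) (hB : Continuous B)
    (form_nonneg : ∀ r s t, 0 ≤ s ^ 2 * B r + 2 * s * t * M r + t ^ 2 * A r)
    (hq : ∀ r ∈ Icc a b, HasDerivAt q (q' r) r) (hq' : ContinuousOn q' (Icc a b))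
    (hρ : Continuous ρ) (ρ_pos : ∀ r ∈ Ioo a b, 0 < ρ r) (hG : Continuous G)
    (riccati : ∀ r ∈ Ioo a b, A r * (ρ r * q' r + q r ^ 2) ≤ ρ r * G r)
    (left_zero : A a * q a = 0) (right_zero : A b * q b = 0) :
    0 ≤ ∫ r in a..b, (ρ r * B r + G r) := by
  have A_cont : Continuous A := continuous_iff_continuousAt.2 fun r ↦ (hA r).continuousAt
  have q_cont : ContinuousOn q (Icc a b) := fun r hr ↦ (hq r hr).continuousAt.continuousWithinAt
  have deriv_cont : ContinuousOn (fun r ↦ 2 * M r * q r + A r * q' r) (uIcc a b) := by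
    rw [uIcc_of_le hab]; fun_prop
  have integral_deriv : ∫ r in a..b, (2 * M r * q r + A r * q' r) = 0 := by
    rw [intervalIntegral.integral_eq_sub_of_hasDerivAt
      (fun r hr ↦ (hA r).mul (hq r (by rwa [uIcc_of_le hab] at hr))) deriv_cont.intervalIntegrable]
    simp [left_zero, right_zero]
  rw [← integral_deriv]
  refine intervalIntegral.integral_mono_on_of_le_Ioo hab deriv_cont.intervalIntegrable
    (Continuous.intervalIntegrable (by fun_prop) _ _) fun r hr ↦ ?_
  refine le_of_mul_le_mul_left ?_ (ρ_pos r hr)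
  linarith [form_nonneg r (ρ r) (-q r), riccati r hr]

end Riccati

section Wirtinger

variable {f f' g g' : ℝ → ℝ}

lemma mul_integral_sq_le_of_dirichlet (hg : ∀ x, HasDerivAt g (g' x) x) (hg' : Continuous g')
    {a l : ℝ} (left_zero : g a = 0) (right_zero : g (a + π) = 0) (hl : l ∈ Ioo (0 : ℝ) 1) :
    l ^ 2 * ∫ x in a..(a + π), g x ^ 2 ≤ ∫ x in a..(a + π), g' x ^ 2 := by
  have g_cont : Continuous g := continuous_iff_continuousAt.2 fun x ↦ (hg x).continuousAt
  have g_sq_deriv (x : ℝ) : HasDerivAt (fun x ↦ g x ^ 2) (2 * (g x * g' x)) x :=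
    ((hg x).fun_pow 2).congr_deriv (by simp [mul_assoc])
  set y : ℝ → ℝ := fun x ↦ l * (x - (a + π / 2))
  have y_deriv (x : ℝ) : HasDerivAt y l x := by
    simpa using ((hasDerivAt_id x).sub_const (a + π / 2)).const_mul l
  have cos_pos : ∀ x ∈ Icc a (a + π), 0 < cos (y x) := by
    rintro x ⟨hax, hxa⟩
    refine cos_pos_of_mem_Ioo (abs_lt.1 ?_)
    calc |y x| = l * |x - (a + π / 2)| := by rw [abs_mul, abs_of_pos hl.1]
      _ ≤ l * (π / 2) :=
        mul_le_mul_of_nonneg_left (abs_le.2 ⟨by linarith, by linarith⟩) hl.1.le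
      _ < π / 2 := mul_lt_of_lt_one_left (by positivity) hl.2
  have tan_deriv : ∀ x ∈ Icc a (a + π),
      HasDerivAt (fun x ↦ -(l * tan (y x))) (-(l * (1 / cos (y x) ^ 2 * l))) x := fun x hx ↦
    (((hasDerivAt_tan (cos_pos x hx).ne').comp x (y_deriv x)).const_mul l).neg
  have tan_deriv_cont : ContinuousOn (fun x ↦ -(l * (1 / cos (y x) ^ 2 * l))) (Icc a (a + π)) := by
    have : ∀ x ∈ Icc a (a + π), cos (y x) ^ 2 ≠ 0 := fun x hx ↦ (pow_pos (cos_pos x hx) 2).ne'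
    fun_prop (disch := assumption)
  have riccati : ∀ x ∈ Ioo a (a + π),
      g x ^ 2 * (1 * -(l * (1 / cos (y x) ^ 2 * l)) + (-(l * tan (y x))) ^ 2) ≤
        1 * (-l ^ 2 * g x ^ 2) := fun x hx ↦ by
    rw [← inv_one_add_tan_sq (cos_pos x (Ioo_subset_Icc_self hx)).ne', one_div, inv_inv]
    exact le_of_eq (by ring)
  have := integral_add_nonneg_of_riccati (B := fun x ↦ g' x ^ 2) (G := fun x ↦ -l ^ 2 * g x ^ 2)
    (by linarith [pi_pos]) g_sq_deriv (by fun_prop) (by fun_prop)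
    (fun x s t ↦ by linarith [sq_nonneg (s * g' x + t * g x)])
    tan_deriv tan_deriv_cont continuous_const (fun _ _ ↦ one_pos)
    (by fun_prop) riccati (by simp [left_zero]) (by simp [right_zero])
  simp only [one_mul] at this
  rw [intervalIntegral.integral_add (Continuous.intervalIntegrable (by fun_prop) _ _)
    (Continuous.intervalIntegrable (by fun_prop) _ _), intervalIntegral.integral_const_mul] at this
  linarith

lemma integral_sq_le_of_dirichlet (hg : ∀ x, HasDerivAt g (g' x) x) (hg' : Continuous g')
    {a : ℝ} (left_zero : g a = 0) (right_zero : g (a + π) = 0) :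
    ∫ x in a..(a + π), g x ^ 2 ≤ ∫ x in a..(a + π), g' x ^ 2 := by
  have hlim : Tendsto (fun l : ℝ ↦ l ^ 2 * ∫ x in a..(a + π), g x ^ 2) (𝓝[<] 1)
      (𝓝 (1 ^ 2 * ∫ x in a..(a + π), g x ^ 2)) :=
    (Continuous.tendsto (by fun_prop) 1).mono_left nhdsWithin_le_nhds
  rw [one_pow, one_mul] at hlim
  refine le_of_tendsto hlim ?_
  filter_upwards [Ioo_mem_nhdsLT zero_lt_one] with l hl
  exact mul_integral_sq_le_of_dirichlet hg hg' left_zero right_zero hl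

lemma exists_add_half_period_eq {p : ℝ} (hf : Continuous f) (hper : Function.Periodic f (2 * p)) :
    ∃ a, f (a + p) = f a := by
  have hsum : f (p + p) = f 0 := by rw [← two_mul, hper.eq]
  have hzero : (0 : ℝ) ∈ uIcc (f (0 + p) - f 0) (f (p + p) - f p) := by
    rw [hsum, zero_add, mem_uIcc]
    rcases le_total (f p) (f 0) with h | h
    · exact .inl ⟨by linarith, by linarith⟩
    · exact .inr ⟨by linarith, by linarith⟩
  obtain ⟨a, -, ha⟩ := intermediate_value_uIcc (f := fun x ↦ f (x + p) - f x)
    (by fun_prop) hzero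
  exact ⟨a, sub_eq_zero.1 ha⟩

lemma integral_period_eq_add_half (hf : Continuous f) (hper : Function.Periodic f (2 * π))
    (a : ℝ) : ∫ x in (-π)..π, f x =
      (∫ x in a..(a + π), f x) + ∫ x in (a + π)..(a + π + π), f x := by
  rw [intervalIntegral.integral_add_adjacent_intervals (hf.intervalIntegrable _ _)
    (hf.intervalIntegrable _ _)]
  convert hper.intervalIntegral_add_eq (-π) a using 2 <;> ring

lemma integral_sub_const_sq (hf : Continuous f) (c : ℝ) :
    ∫ x in (-π)..π, (f x - c) ^ 2 =
      (∫ x in (-π)..π, f x ^ 2) - 2 * c * (∫ x in (-π)..π, f x) + 2 * π * c ^ 2 := by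
  have hexpand (x : ℝ) : (f x - c) ^ 2 = f x ^ 2 - 2 * c * f x + c ^ 2 := by ring
  simp only [hexpand]
  rw [intervalIntegral.integral_add (Continuous.intervalIntegrable (by fun_prop) _ _) (by simp),
    intervalIntegral.integral_sub (Continuous.intervalIntegrable (by fun_prop) _ _)
      (Continuous.intervalIntegrable (by fun_prop) _ _),
    intervalIntegral.integral_const_mul, intervalIntegral.integral_const, smul_eq_mul]
  ring

-- At `a` with `f (a + π) = f a`, the function `f - f a` vanishes at the ends of both half-periods.
lemma integral_sq_le_of_periodic (hf : ∀ x, HasDerivAt f (f' x) x) (hf' : Continuous f')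
    (hper : Function.Periodic f (2 * π)) (hper' : Function.Periodic f' (2 * π))
    (mean_zero : ∫ x in (-π)..π, f x = 0) :
    ∫ x in (-π)..π, f x ^ 2 ≤ ∫ x in (-π)..π, f' x ^ 2 := by
  have f_cont : Continuous f := continuous_iff_continuousAt.2 fun x ↦ (hf x).continuousAt
  obtain ⟨a, ha⟩ := exists_add_half_period_eq f_cont hper
  have ha' : f (a + π + π) = f a := by rw [add_assoc, ← two_mul, hper a]
  have sub_deriv (x : ℝ) : HasDerivAt (fun x ↦ f x - f a) (f' x) x := (hf x).sub_const _
  have first_half := integral_sq_le_of_dirichlet sub_deriv hf' (a := a) (by simp) (by simp [ha])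
  have second_half := integral_sq_le_of_dirichlet sub_deriv hf' (a := a + π) (by simp [ha])
    (by simp [ha'])
  have hsplit := integral_period_eq_add_half (f := fun x ↦ (f x - f a) ^ 2) (by fun_prop)
    (fun x ↦ by simp only [hper x]) a
  have hsplit' := integral_period_eq_add_half (f := fun x ↦ f' x ^ 2) (by fun_prop)
    (fun x ↦ by simp only [hper' x]) a
  have hexpand := integral_sub_const_sq f_cont (f a)
  have : 0 ≤ 2 * π * f a ^ 2 := by positivity
  rw [mean_zero] at hexpand
  linarith

end Wirtinger

section BesselRiccati

variable {n : ℕ} {κ r : ℝ}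

/-- The function `r φ' / φ` for `φ r = r ^ n * 𝒞 n (κ * r ^ 2)`, the radial part of the `n`-th
angular mode of an eigenfunction with eigenvalue `4 * κ`. -/
def besselRiccati (n : ℕ) (κ r : ℝ) : ℝ :=
  n - 2 * (κ * r ^ 2) * 𝒞 (n + 1) (κ * r ^ 2) / 𝒞 n (κ * r ^ 2)

lemma hasDerivAt_besselClifford_comp (n : ℕ) (κ r : ℝ) :
    HasDerivAt (fun r ↦ 𝒞 n (κ * r ^ 2)) (-𝒞 (n + 1) (κ * r ^ 2) * (2 * κ * r)) r := by
  have hsq : HasDerivAt (fun r : ℝ ↦ κ * r ^ 2) (2 * κ * r) r :=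
    ((hasDerivAt_pow 2 r).const_mul κ).congr_deriv (by simp; ring)
  exact (hasDerivAt_besselClifford n _).comp r hsq

lemma hasDerivAt_besselRiccati (h : 𝒞 n (κ * r ^ 2) ≠ 0) :
    HasDerivAt (besselRiccati n κ)
      (-(4 * κ * r) * (1 - n * (𝒞 (n + 1) (κ * r ^ 2) / 𝒞 n (κ * r ^ 2)) +
        κ * r ^ 2 * (𝒞 (n + 1) (κ * r ^ 2) / 𝒞 n (κ * r ^ 2)) ^ 2)) r := by
  have hsq : HasDerivAt (fun r : ℝ ↦ 2 * (κ * r ^ 2)) (4 * κ * r) r :=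
    (((hasDerivAt_pow 2 r).const_mul κ).const_mul 2).congr_deriv (by simp; ring)
  refine (((hsq.fun_mul (hasDerivAt_besselClifford_comp (n + 1) κ r)).div
    (hasDerivAt_besselClifford_comp n κ r) h).const_sub (n : ℝ)).congr_deriv ?_
  have hrec := mul_besselClifford_add_two n (κ * r ^ 2)
  field_simp
  linear_combination (4 * κ * r * 𝒞 n (κ * r ^ 2)) * hrec

lemma exists_hasDerivAt_besselRiccati (hpos : ∀ s ∈ Icc 0 κ, 0 < 𝒞 n s) (hκ : 0 ≤ κ) :
    ∃ q' : ℝ → ℝ, (∀ r ∈ Icc (0 : ℝ) 1, HasDerivAt (besselRiccati n κ) (q' r) r) ∧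
      ContinuousOn q' (Icc 0 1) ∧
      ∀ r ∈ Icc (0 : ℝ) 1, r * q' r + besselRiccati n κ r ^ 2 = n ^ 2 - 4 * κ * r ^ 2 := by
  have hne : ∀ r ∈ Icc (0 : ℝ) 1, 𝒞 n (κ * r ^ 2) ≠ 0 := fun r hr ↦
    (hpos _ ⟨by positivity, mul_le_of_le_one_right hκ (pow_le_one₀ hr.1 hr.2)⟩).ne'
  refine ⟨_, fun r hr ↦ hasDerivAt_besselRiccati (hne r hr), ?_, fun r hr ↦ ?_⟩
  · fun_prop (disch := assumption)
  · have := hne r hr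
    rw [besselRiccati]
    field_simp
    ring

lemma four_mul_integral_le_of_besselClifford_pos (hpos : ∀ s ∈ Icc 0 κ, 0 < 𝒞 n s) (hκ : 0 ≤ κ)
    {A M B C : ℝ → ℝ} (hA : ∀ r, HasDerivAt A (2 * M r) r) (hM : Continuous M)
    (hB : Continuous B) (hC : Continuous C)
    (form_nonneg : ∀ r s t, 0 ≤ s ^ 2 * B r + 2 * s * t * M r + t ^ 2 * A r)
    (hAC : ∀ r ∈ Ioo (0 : ℝ) 1, n ^ 2 * A r ≤ r ^ 2 * C r)
    (left_zero : A 0 * besselRiccati n κ 0 = 0) (right_zero : A 1 * besselRiccati n κ 1 = 0) :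
    4 * κ * (∫ r in (0 : ℝ)..1, r * A r) ≤ ∫ r in (0 : ℝ)..1, r * (B r + C r) := by
  have A_cont : Continuous A := continuous_iff_continuousAt.2 fun r ↦ (hA r).continuousAt
  obtain ⟨q', hq, hq', hric⟩ := exists_hasDerivAt_besselRiccati hpos hκ
  have := integral_add_nonneg_of_riccati (ρ := fun r ↦ r)
    (G := fun r ↦ r * C r - 4 * κ * (r * A r)) zero_le_one hA hM hB form_nonneg hq hq'
    continuous_id (fun r hr ↦ hr.1) (by fun_prop)
    (fun r hr ↦ by rw [hric r (Ioo_subset_Icc_self hr)]; linarith [hAC r hr])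
    left_zero right_zero
  simp only [← add_sub_assoc, ← mul_add] at this
  rwa [intervalIntegral.integral_sub (Continuous.intervalIntegrable (by fun_prop) _ _)
    (Continuous.intervalIntegrable (by fun_prop) _ _), intervalIntegral.integral_const_mul,
    sub_nonneg] at this

-- Comparison with `𝒞 0` needs a function vanishing at `1`; subtracting `U 1` only increases the
-- left-hand side because `U` has mean zero.
lemma four_mul_integral_sq_le_of_radial (hpos : ∀ s ∈ Icc 0 κ, 0 < 𝒞 0 s) (hκ : 0 ≤ κ)
    {U U' : ℝ → ℝ} (hU : ∀ r, HasDerivAt U (U' r) r) (hU' : Continuous U')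
    (mean_zero : ∫ r in (0 : ℝ)..1, r * U r = 0) :
    4 * κ * (∫ r in (0 : ℝ)..1, r * U r ^ 2) ≤ ∫ r in (0 : ℝ)..1, r * U' r ^ 2 := by
  have U_cont : Continuous U := continuous_iff_continuousAt.2 fun r ↦ (hU r).continuousAt
  have sub_sq_deriv (r : ℝ) :
      HasDerivAt (fun r ↦ (U r - U 1) ^ 2) (2 * ((U r - U 1) * U' r)) r :=
    (((hU r).sub_const (U 1)).fun_pow 2).congr_deriv (by simp [mul_assoc])
  have comparison := four_mul_integral_le_of_besselClifford_pos (B := fun r ↦ U' r ^ 2)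
    (C := fun _ ↦ 0) hpos hκ sub_sq_deriv (by fun_prop) (by fun_prop) continuous_const
    (fun r s t ↦ by linarith [sq_nonneg (s * U' r + t * (U r - U 1))]) (fun r _ ↦ by simp)
    (by simp [besselRiccati]) (by simp)
  have hexpand (r : ℝ) :
      r * (U r - U 1) ^ 2 = r * U r ^ 2 - 2 * U 1 * (r * U r) + U 1 ^ 2 * r := by ring
  have integral_expand : ∫ r in (0 : ℝ)..1, r * (U r - U 1) ^ 2 =
      (∫ r in (0 : ℝ)..1, r * U r ^ 2) + U 1 ^ 2 / 2 := by
    simp only [hexpand]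
    rw [intervalIntegral.integral_add (Continuous.intervalIntegrable (by fun_prop) _ _)
      (Continuous.intervalIntegrable (by fun_prop) _ _),
      intervalIntegral.integral_sub (Continuous.intervalIntegrable (by fun_prop) _ _)
      (Continuous.intervalIntegrable (by fun_prop) _ _), intervalIntegral.integral_const_mul,
      intervalIntegral.integral_const_mul, mean_zero, integral_id]
    ring
  simp only [add_zero, integral_expand] at comparison
  have : 0 ≤ κ * U 1 ^ 2 := by positivity
  linarith

end BesselRiccati

section AngularFluctuation

variable {K K' : ℝ → ℝ → ℝ}

lemma hasDerivAt_integral_of_continuous (hK : Continuous (Function.uncurry K))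
    (hK' : Continuous (Function.uncurry K'))
    (hderiv : ∀ r θ, HasDerivAt (fun r ↦ K r θ) (K' r θ) r) (a b r : ℝ) :
    HasDerivAt (fun r ↦ ∫ θ in a..b, K r θ) (∫ θ in a..b, K' r θ) r := by
  obtain ⟨C, hC⟩ := ((isCompact_Icc (a := r - 1) (b := r + 1)).prod
    (isCompact_uIcc (a := a) (b := b))).exists_bound_of_continuousOn hK'.continuousOn
  exact (intervalIntegral.hasDerivAt_integral_of_dominated_loc_of_deriv_le
    (s := Icc (r - 1) (r + 1)) (bound := fun _ ↦ C)
    (Icc_mem_nhds (by linarith) (by linarith))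
    (.of_forall fun s ↦ (hK.uncurry_left s).aestronglyMeasurable)
    ((hK.uncurry_left r).intervalIntegrable _ _) (hK'.uncurry_left r).aestronglyMeasurable
    (.of_forall fun θ hθ s hs ↦ hC (s, θ) ⟨hs, uIoc_subset_uIcc hθ⟩) (by simp)
    (.of_forall fun θ _ s _ ↦ hderiv s θ)).2

/-- The mean of `K r` over a period, where `K r θ` is a function of polar coordinates. -/
def circleMean (K : ℝ → ℝ → ℝ) (r : ℝ) : ℝ := (2 * π)⁻¹ * ∫ θ in (-π)..π, K r θ

/-- The part of `K`, a function of polar coordinates, which has mean zero over every circle. -/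
def fluctuation (K : ℝ → ℝ → ℝ) (r θ : ℝ) : ℝ := K r θ - circleMean K r

lemma integral_eq_circleMean (K : ℝ → ℝ → ℝ) (r : ℝ) :
    ∫ θ in (-π)..π, K r θ = 2 * π * circleMean K r := by
  rw [circleMean, mul_inv_cancel_left₀ two_pi_pos.ne']

lemma continuous_circleMean (hK : Continuous (Function.uncurry K)) : Continuous (circleMean K) :=
  continuous_const.mul
    (intervalIntegral.continuous_parametric_intervalIntegral_of_continuous' hK _ _)

lemma continuous_fluctuation (hK : Continuous (Function.uncurry K)) :
    Continuous (Function.uncurry (fluctuation K)) :=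
  hK.sub ((continuous_circleMean hK).comp continuous_fst)

lemma hasDerivAt_circleMean (hK : Continuous (Function.uncurry K))
    (hK' : Continuous (Function.uncurry K'))
    (hderiv : ∀ r θ, HasDerivAt (fun r ↦ K r θ) (K' r θ) r) (r : ℝ) :
    HasDerivAt (circleMean K) (circleMean K' r) r :=
  (hasDerivAt_integral_of_continuous hK hK' hderiv _ _ r).const_mul _

lemma hasDerivAt_fluctuation (hK : Continuous (Function.uncurry K))
    (hK' : Continuous (Function.uncurry K'))
    (hderiv : ∀ r θ, HasDerivAt (fun r ↦ K r θ) (K' r θ) r) (r θ : ℝ) :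
    HasDerivAt (fun r ↦ fluctuation K r θ) (fluctuation K' r θ) r :=
  (hderiv r θ).sub (hasDerivAt_circleMean hK hK' hderiv r)

lemma integral_fluctuation (hK : Continuous (Function.uncurry K)) (r : ℝ) :
    ∫ θ in (-π)..π, fluctuation K r θ = 0 := by
  simp only [fluctuation]
  rw [intervalIntegral.integral_sub ((hK.uncurry_left r).intervalIntegrable _ _) (by simp),
    integral_eq_circleMean, intervalIntegral.integral_const, smul_eq_mul]
  ring

lemma integral_sq_eq_circleMean_add_fluctuation (hK : Continuous (Function.uncurry K)) (r : ℝ) :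
    ∫ θ in (-π)..π, K r θ ^ 2 =
      2 * π * circleMean K r ^ 2 + ∫ θ in (-π)..π, fluctuation K r θ ^ 2 := by
  simp only [fluctuation]
  rw [integral_sub_const_sq (hK.uncurry_left r), integral_eq_circleMean]
  ring

lemma integral_mul_integral_sq_eq_circleMean_add_fluctuation
    (hK : Continuous (Function.uncurry K)) :
    ∫ r in (0 : ℝ)..1, r * ∫ θ in (-π)..π, K r θ ^ 2 =
      2 * π * (∫ r in (0 : ℝ)..1, r * circleMean K r ^ 2) +
        ∫ r in (0 : ℝ)..1, r * ∫ θ in (-π)..π, fluctuation K r θ ^ 2 := by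
  have mean_cont := continuous_circleMean hK
  have fluctuation_cont : Continuous fun r ↦ ∫ θ in (-π)..π, fluctuation K r θ ^ 2 :=
    intervalIntegral.continuous_parametric_intervalIntegral_of_continuous'
      ((continuous_fluctuation hK).pow 2) _ _
  rw [← intervalIntegral.integral_const_mul, ← intervalIntegral.integral_add
    (Continuous.intervalIntegrable (by fun_prop) _ _)
    (Continuous.intervalIntegrable (by fun_prop) _ _)]
  simp only [integral_sq_eq_circleMean_add_fluctuation hK]
  exact intervalIntegral.integral_congr fun r _ ↦ by ring

lemma integral_form_nonneg {v w : ℝ → ℝ} (hv : Continuous v) (hw : Continuous w) {a b : ℝ}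
    (hab : a ≤ b) (s t : ℝ) :
    0 ≤ s ^ 2 * (∫ θ in a..b, w θ ^ 2) + 2 * s * t * (∫ θ in a..b, v θ * w θ) +
      t ^ 2 * ∫ θ in a..b, v θ ^ 2 := by
  have hexpand (θ : ℝ) : (s * w θ + t * v θ) ^ 2 =
      s ^ 2 * w θ ^ 2 + 2 * s * t * (v θ * w θ) + t ^ 2 * v θ ^ 2 := by ring
  have : 0 ≤ ∫ θ in a..b, (s * w θ + t * v θ) ^ 2 :=
    intervalIntegral.integral_nonneg hab fun θ _ ↦ sq_nonneg _
  simp only [hexpand] at this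
  rwa [intervalIntegral.integral_add (Continuous.intervalIntegrable (by fun_prop) _ _)
    (Continuous.intervalIntegrable (by fun_prop) _ _), intervalIntegral.integral_add
    (Continuous.intervalIntegrable (by fun_prop) _ _)
    (Continuous.intervalIntegrable (by fun_prop) _ _), intervalIntegral.integral_const_mul,
    intervalIntegral.integral_const_mul, intervalIntegral.integral_const_mul] at this

lemma IsNeumannFrequency.besselRiccati_one {κ : ℝ} (hκ : IsNeumannFrequency κ) :
    besselRiccati 1 κ 1 = 0 := by
  have := (hκ.besselClifford_one_pos κ ⟨hκ.pos.le, le_rfl⟩).ne'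
  simp [besselRiccati, ← hκ.neumann, this]

lemma IsNeumannFrequency.four_mul_integral_sq_le_of_fluctuation {κ : ℝ}
    (hκ : IsNeumannFrequency κ) {v w τ : ℝ → ℝ → ℝ}
    (hv : Continuous (Function.uncurry v)) (hw : Continuous (Function.uncurry w))
    (hτ : Continuous (Function.uncurry τ))
    (radial_deriv : ∀ r θ, HasDerivAt (fun r ↦ v r θ) (w r θ) r)
    (angular_deriv : ∀ r θ, HasDerivAt (v r) (r * τ r θ) θ)
    (v_periodic : ∀ r, Function.Periodic (v r) (2 * π))
    (τ_periodic : ∀ r, Function.Periodic (τ r) (2 * π))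
    (mean_zero : ∀ r, ∫ θ in (-π)..π, v r θ = 0) (v_zero : ∀ θ, v 0 θ = 0) :
    4 * κ * (∫ r in (0 : ℝ)..1, r * ∫ θ in (-π)..π, v r θ ^ 2) ≤
      ∫ r in (0 : ℝ)..1, r * ((∫ θ in (-π)..π, w r θ ^ 2) + ∫ θ in (-π)..π, τ r θ ^ 2) := by
  have integral_cont {K : ℝ → ℝ → ℝ} (hK : Continuous (Function.uncurry K)) :
      Continuous fun r ↦ ∫ θ in (-π)..π, K r θ :=
    intervalIntegral.continuous_parametric_intervalIntegral_of_continuous' hK _ _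
  have mass_deriv (r : ℝ) : HasDerivAt (fun r ↦ ∫ θ in (-π)..π, v r θ ^ 2)
      (2 * ∫ θ in (-π)..π, v r θ * w r θ) r := by
    rw [← intervalIntegral.integral_const_mul]
    exact hasDerivAt_integral_of_continuous (K := fun r θ ↦ v r θ ^ 2)
      (K' := fun r θ ↦ 2 * (v r θ * w r θ)) (hv.fun_pow 2)
      (continuous_const.fun_mul (hv.fun_mul hw))
      (fun r θ ↦ ((radial_deriv r θ).fun_pow 2).congr_deriv (by simp [mul_assoc])) _ _ r
  have wirtinger (r : ℝ) : ∫ θ in (-π)..π, v r θ ^ 2 ≤ r ^ 2 * ∫ θ in (-π)..π, τ r θ ^ 2 := by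
    have := integral_sq_le_of_periodic (angular_deriv r)
      (continuous_const.mul (hτ.uncurry_left r)) (v_periodic r)
      (fun θ ↦ by simp only [τ_periodic r θ]) (mean_zero r)
    simpa only [mul_pow, intervalIntegral.integral_const_mul] using this
  exact four_mul_integral_le_of_besselClifford_pos hκ.besselClifford_one_pos hκ.pos.le mass_deriv
    (integral_cont (K := fun r θ ↦ v r θ * w r θ) (hv.mul hw))
    (integral_cont (K := fun r θ ↦ w r θ ^ 2) (hw.pow 2))
    (integral_cont (K := fun r θ ↦ τ r θ ^ 2) (hτ.pow 2))
    (fun r ↦ integral_form_nonneg (hv.uncurry_left r) (hw.uncurry_left r)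
      (neg_le_self pi_nonneg))
    (fun r _ ↦ by simpa using wirtinger r) (by simp [v_zero]) (by simp [hκ.besselRiccati_one])

end AngularFluctuation

section NeumannDisc

variable {κ : ℝ} {u : E2 → ℝ}

lemma integral_unitDisc_norm_fderiv_sq_eq_polar (hu : ContDiff ℝ 1 u) :
    ∫ x in unitDisc, ‖fderiv ℝ u x‖ ^ 2 =
      2 * π * (∫ r in (0 : ℝ)..1, r * circleMean (radialDeriv u) r ^ 2) +
        ∫ r in (0 : ℝ)..1, r * ((∫ θ in (-π)..π, fluctuation (radialDeriv u) r θ ^ 2) +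
          ∫ θ in (-π)..π, tangentialDeriv u r θ ^ 2) := by
  have radial_cont := continuous_radialDeriv hu
  have tangential_cont := continuous_tangentialDeriv hu
  have integral_cont {K : ℝ → ℝ → ℝ} (hK : Continuous (Function.uncurry K)) :
      Continuous fun r ↦ ∫ θ in (-π)..π, K r θ ^ 2 :=
    intervalIntegral.continuous_parametric_intervalIntegral_of_continuous' (hK.pow 2) _ _
  have := integral_cont radial_cont
  have := integral_cont tangential_cont
  have := integral_cont (continuous_fluctuation radial_cont)
  rw [setIntegral_unitDisc_eq_polar ((hu.continuous_fderiv one_ne_zero).norm.fun_pow 2)]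
  simp only [norm_fderiv_sq_eq_radialDeriv_add_tangentialDeriv, mul_add]
  simp only [intervalIntegral.integral_add
    ((radial_cont.uncurry_left _).fun_pow 2 |>.intervalIntegrable _ _)
    ((tangential_cont.uncurry_left _).fun_pow 2 |>.intervalIntegrable _ _), mul_add]
  rw [intervalIntegral.integral_add (Continuous.intervalIntegrable (by fun_prop) _ _)
    (Continuous.intervalIntegrable (by fun_prop) _ _), intervalIntegral.integral_add
    (Continuous.intervalIntegrable (by fun_prop) _ _)
    (Continuous.intervalIntegrable (by fun_prop) _ _),
    integral_mul_integral_sq_eq_circleMean_add_fluctuation radial_cont, add_assoc]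

lemma integral_mul_circleMean_eq_zero (hu : IsNeumannTest unitDisc u) :
    ∫ r in (0 : ℝ)..1, r * circleMean (fun r θ ↦ u (r • unitVec θ)) r = 0 := by
  have mean_zero := hu.integral_eq_zero
  rw [setIntegral_unitDisc_eq_polar hu.contDiff.continuous] at mean_zero
  simp only [integral_eq_circleMean fun r θ ↦ u (r • unitVec θ), mul_left_comm _ (2 * π),
    intervalIntegral.integral_const_mul] at mean_zero
  exact (mul_eq_zero.1 mean_zero).resolve_left two_pi_pos.ne'

-- The mean over circles is compared with the radial mode `𝒞 0`, the fluctuation with the first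
-- angular mode, whose frequency Wirtinger's inequality bounds from below.
lemma IsNeumannFrequency.four_mul_integral_sq_le (hκ : IsNeumannFrequency κ)
    (hu : IsNeumannTest unitDisc u) :
    4 * κ * ∫ x in unitDisc, u x ^ 2 ≤ ∫ x in unitDisc, ‖fderiv ℝ u x‖ ^ 2 := by
  set K : ℝ → ℝ → ℝ := fun r θ ↦ u (r • unitVec θ) with hK
  have u_cont := hu.contDiff.continuous
  have K_cont : Continuous (Function.uncurry K) := by simp only [hK, Function.uncurry_def]; fun_prop
  have radial_cont := continuous_radialDeriv hu.contDiff_one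
  have K_deriv := hasDerivAt_radialDeriv hu.contDiff_one
  have mean_le := four_mul_integral_sq_le_of_radial hκ.besselClifford_zero_pos hκ.pos.le
    (hasDerivAt_circleMean K_cont radial_cont fun r θ ↦ K_deriv r θ)
    (continuous_circleMean radial_cont) (integral_mul_circleMean_eq_zero hu)
  have fluctuation_zero (θ : ℝ) : fluctuation K 0 θ = 0 := by
    simp only [fluctuation, circleMean, hK, zero_smul, intervalIntegral.integral_const, smul_eq_mul]
    field_simp
    ring
  have fluctuation_le := hκ.four_mul_integral_sq_le_of_fluctuation (continuous_fluctuation K_cont)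
    (continuous_fluctuation radial_cont) (continuous_tangentialDeriv hu.contDiff_one)
    (hasDerivAt_fluctuation K_cont radial_cont fun r θ ↦ K_deriv r θ)
    (fun r θ ↦ (hasDerivAt_tangentialDeriv hu.contDiff_one r θ).sub_const _)
    (fun r θ ↦ by simp only [fluctuation, hK, periodic_unitVec θ]) (periodic_tangentialDeriv u)
    (integral_fluctuation K_cont) fluctuation_zero
  have mass_eq : ∫ x in unitDisc, u x ^ 2 =
      2 * π * (∫ r in (0 : ℝ)..1, r * circleMean K r ^ 2) +
        ∫ r in (0 : ℝ)..1, r * ∫ θ in (-π)..π, fluctuation K r θ ^ 2 := by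
    rw [setIntegral_unitDisc_eq_polar (u_cont.fun_pow 2),
      ← integral_mul_integral_sq_eq_circleMean_add_fluctuation K_cont]
  rw [mass_eq, integral_unitDisc_norm_fderiv_sq_eq_polar hu.contDiff_one]
  linarith [mul_le_mul_of_nonneg_left mean_le two_pi_pos.le]

lemma IsNeumannFrequency.le_nEig1_unitDisc (hκ : IsNeumannFrequency κ) :
    4 * κ ≤ nEig1 unitDisc :=
  le_nEig1 Metric.isOpen_ball ⟨0, Metric.mem_ball_self one_pos⟩ Metric.isBounded_ball
    fun _ hu ↦ hκ.four_mul_integral_sq_le hu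

end NeumannDisc

section NeumannMode

variable {κ t : ℝ}

lemma integral_trig_quartic (a b c : ℝ) :
    ∫ θ in (-π)..π, (a + b * cos θ ^ 2 + c * cos θ ^ 4) = π * (2 * a + b + 3 / 4 * c) := by
  have antideriv (θ : ℝ) : HasDerivAt (fun θ ↦ a * θ + b * ((θ + sin θ * cos θ) / 2) +
      c * (sin θ * cos θ ^ 3 / 4 + 3 / 8 * (θ + sin θ * cos θ)))
      (a + b * cos θ ^ 2 + c * cos θ ^ 4) θ := by
    have quadratic := (hasDerivAt_id θ).fun_add ((hasDerivAt_sin θ).fun_mul (hasDerivAt_cos θ))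
    have quartic := (hasDerivAt_sin θ).fun_mul ((hasDerivAt_cos θ).fun_pow 3)
    refine ((((hasDerivAt_id θ).const_mul a).add ((quadratic.div_const 2).const_mul b)).add
      (((quartic.div_const 4).add (quadratic.const_mul (3 / 8))).const_mul c)).congr_deriv ?_
    push_cast
    linear_combination (-(b / 2) - c * (3 / 8) - 3 / 4 * c * cos θ ^ 2) * sin_sq_add_cos_sq θ
  rw [intervalIntegral.integral_eq_sub_of_hasDerivAt (fun θ _ ↦ antideriv θ)
    (Continuous.intervalIntegrable (by fun_prop) _ _)]
  simp only [sin_pi, sin_neg]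
  ring

/-- The eigenfunction `J₁(2 √κ r) cos θ` of the disc up to a constant factor, one of the two that
span the eigenspace of the first nontrivial Neumann eigenvalue. -/
def neumannMode (κ : ℝ) (x : E2) : ℝ := x 0 * radialBessel 1 κ x

lemma contDiff_neumannMode (κ : ℝ) {m : ℕ∞} : ContDiff ℝ m (neumannMode κ) :=
  (contDiff_coord 0).mul (contDiff_radialBessel 1 κ)

lemma radialBessel_polar (n : ℕ) (κ r θ : ℝ) :
    radialBessel n κ (r • unitVec θ) = 𝒞 n (κ * r ^ 2) := by
  rw [radialBessel, norm_smul_unitVec_sq]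

lemma neumannMode_polar (κ r θ : ℝ) :
    neumannMode κ (r • unitVec θ) = r * 𝒞 1 (κ * r ^ 2) * cos θ := by
  rw [neumannMode, radialBessel_polar]
  simp [unitVec, mul_right_comm]

lemma dirDeriv_neumannMode (v x : E2) :
    dirDeriv v (neumannMode κ) x =
      v 0 * radialBessel 1 κ x - 2 * κ * x 0 * ⟪x, v⟫ * radialBessel 2 κ x := by
  have := dirDeriv_mul (v := v) (x := x) ((contDiff_coord 0).differentiable one_ne_zero x)
    ((contDiff_radialBessel 1 κ).differentiable one_ne_zero x)
  rw [dirDeriv_coord, dirDeriv_radialBessel] at this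
  exact this.trans (by ring)

lemma partialDeriv_zero_neumannMode_polar (κ r θ : ℝ) :
    partialDeriv 0 (neumannMode κ) (r • unitVec θ) =
      𝒞 1 (κ * r ^ 2) - 2 * (κ * r ^ 2 * 𝒞 2 (κ * r ^ 2)) * cos θ ^ 2 := by
  rw [partialDeriv, dirDeriv_neumannMode, radialBessel_polar, radialBessel_polar]
  simp only [Fin.isValue, PiLp.single_eq_same, one_mul, unitVec, PiLp.smul_apply,
    Matrix.cons_val_zero, smul_eq_mul, EuclideanSpace.inner_single_right, ringHom_apply]
  ring

lemma partialDeriv_one_neumannMode_polar (κ r θ : ℝ) :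
    partialDeriv 1 (neumannMode κ) (r • unitVec θ) =
      -(2 * (κ * r ^ 2 * 𝒞 2 (κ * r ^ 2)) * (sin θ * cos θ)) := by
  rw [partialDeriv, dirDeriv_neumannMode, radialBessel_polar, radialBessel_polar]
  simp only [Fin.isValue, ne_eq, zero_ne_one, not_false_eq_true, PiLp.single_eq_of_ne, zero_mul,
    unitVec, PiLp.smul_apply, Matrix.cons_val_zero, smul_eq_mul,
    EuclideanSpace.inner_single_right, Matrix.cons_val_one, Matrix.cons_val_fin_one, ringHom_apply,
    one_mul, zero_sub, neg_inj]
  ring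

lemma isNeumannTest_neumannMode (κ : ℝ) : IsNeumannTest unitDisc (neumannMode κ) where
  contDiff := contDiff_neumannMode κ
  integral_eq_zero := by
    rw [setIntegral_unitDisc_eq_polar (contDiff_neumannMode κ (m := 1)).continuous]
    simp [neumannMode_polar]

lemma integral_neumannMode_sq_eq_radial (κ : ℝ) :
    ∫ x in unitDisc, neumannMode κ x ^ 2 =
      π * ∫ r in (0 : ℝ)..1, r ^ 3 * 𝒞 1 (κ * r ^ 2) ^ 2 := by
  have angular (r : ℝ) : ∫ θ in (-π)..π, neumannMode κ (r • unitVec θ) ^ 2 =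
      π * (r * 𝒞 1 (κ * r ^ 2)) ^ 2 := by
    have := integral_trig_quartic 0 ((r * 𝒞 1 (κ * r ^ 2)) ^ 2) 0
    simpa [neumannMode_polar, mul_pow] using this
  rw [setIntegral_unitDisc_eq_polar ((contDiff_neumannMode κ (m := 1)).continuous.fun_pow 2),
    ← intervalIntegral.integral_const_mul]
  exact intervalIntegral.integral_congr fun r _ ↦ by simp only [angular]; ring

lemma IsNeumannFrequency.integral_neumannMode_sq_pos (hκ : IsNeumannFrequency κ) :
    0 < ∫ x in unitDisc, neumannMode κ x ^ 2 := by
  rw [integral_neumannMode_sq_eq_radial]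
  refine mul_pos pi_pos (intervalIntegral.intervalIntegral_pos_of_pos_on
    (Continuous.intervalIntegrable (by fun_prop) _ _) (fun r hr ↦ ?_) one_pos)
  have := hκ.pos
  have := hκ.besselClifford_one_pos (κ * r ^ 2)
    ⟨by positivity, mul_le_of_le_one_right hκ.pos.le (pow_le_one₀ hr.1.le hr.2.le)⟩
  exact mul_pos (pow_pos hr.1 3) (pow_pos this 2)

lemma integral_partialDeriv_one_neumannMode_sq_eq_radial (κ : ℝ) :
    ∫ x in unitDisc, partialDeriv 1 (neumannMode κ) x ^ 2 =
      π * ∫ r in (0 : ℝ)..1, r * (κ * r ^ 2 * 𝒞 2 (κ * r ^ 2)) ^ 2 := by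
  have angular (r : ℝ) : ∫ θ in (-π)..π, partialDeriv 1 (neumannMode κ) (r • unitVec θ) ^ 2 =
      π * (κ * r ^ 2 * 𝒞 2 (κ * r ^ 2)) ^ 2 := by
    set m := κ * r ^ 2 * 𝒞 2 (κ * r ^ 2)
    have expand (θ : ℝ) : (-(2 * m * (sin θ * cos θ))) ^ 2 =
        0 + 4 * m ^ 2 * cos θ ^ 2 + -4 * m ^ 2 * cos θ ^ 4 := by
      linear_combination (4 * m ^ 2 * cos θ ^ 2) * sin_sq_add_cos_sq θ
    simp only [partialDeriv_one_neumannMode_polar, m, expand, integral_trig_quartic]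
    ring
  rw [setIntegral_unitDisc_eq_polar
    ((continuous_partialDeriv 1 (contDiff_neumannMode κ)).fun_pow 2),
    ← intervalIntegral.integral_const_mul]
  exact intervalIntegral.integral_congr fun r _ ↦ by simp only [angular]; ring

lemma integral_norm_fderiv_neumannMode_sq_eq_radial (κ : ℝ) :
    ∫ x in unitDisc, ‖fderiv ℝ (neumannMode κ) x‖ ^ 2 =
      π * ∫ r in (0 : ℝ)..1, r * (𝒞 1 (κ * r ^ 2) ^ 2 +
        (𝒞 1 (κ * r ^ 2) - 2 * (κ * r ^ 2 * 𝒞 2 (κ * r ^ 2))) ^ 2) := by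
  have angular (r : ℝ) : ∫ θ in (-π)..π, ‖fderiv ℝ (neumannMode κ) (r • unitVec θ)‖ ^ 2 =
      π * (𝒞 1 (κ * r ^ 2) ^ 2 +
        (𝒞 1 (κ * r ^ 2) - 2 * (κ * r ^ 2 * 𝒞 2 (κ * r ^ 2))) ^ 2) := by
    set c := 𝒞 1 (κ * r ^ 2)
    set m := κ * r ^ 2 * 𝒞 2 (κ * r ^ 2)
    have expand (θ : ℝ) : (c - 2 * m * cos θ ^ 2) ^ 2 + (-(2 * m * (sin θ * cos θ))) ^ 2 =
        c ^ 2 + (4 * m ^ 2 - 4 * c * m) * cos θ ^ 2 + 0 * cos θ ^ 4 := by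
      linear_combination (4 * m ^ 2 * cos θ ^ 2) * sin_sq_add_cos_sq θ
    simp only [norm_fderiv_sq_eq_partialDeriv, partialDeriv_zero_neumannMode_polar,
      partialDeriv_one_neumannMode_polar, m, c, expand, integral_trig_quartic]
    ring
  rw [setIntegral_unitDisc_eq_polar
    (((contDiff_neumannMode κ).continuous_fderiv one_ne_zero).norm.fun_pow 2),
    ← intervalIntegral.integral_const_mul]
  exact intervalIntegral.integral_congr fun r _ ↦ by simp only [angular]; ring

lemma hasDerivAt_sq_mul_besselClifford_one_sq (κ r : ℝ) :
    HasDerivAt (fun r ↦ r ^ 2 * 𝒞 1 (κ * r ^ 2) ^ 2)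
      (2 * r * 𝒞 1 (κ * r ^ 2) ^ 2 -
        4 * κ * r ^ 3 * (𝒞 1 (κ * r ^ 2) * 𝒞 2 (κ * r ^ 2))) r := by
  refine (((hasDerivAt_id r).fun_pow 2).fun_mul
    ((hasDerivAt_besselClifford_comp 1 κ r).fun_pow 2)).congr_deriv ?_
  simp only [Nat.cast_ofNat, id_eq, Nat.add_one_sub_one, pow_one, mul_one, Nat.reduceAdd]
  ring

lemma hasDerivAt_pow_four_mul_besselClifford_one_mul_two (κ r : ℝ) :
    HasDerivAt (fun r ↦ r ^ 4 * (𝒞 1 (κ * r ^ 2) * 𝒞 2 (κ * r ^ 2)))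
      (2 * (r ^ 3 * 𝒞 1 (κ * r ^ 2) ^ 2 - κ * r ^ 5 * 𝒞 2 (κ * r ^ 2) ^ 2)) r := by
  refine (((hasDerivAt_id r).fun_pow 4).fun_mul ((hasDerivAt_besselClifford_comp 1 κ r).fun_mul
    (hasDerivAt_besselClifford_comp 2 κ r))).congr_deriv ?_
  have recurrence := mul_besselClifford_add_two 1 (κ * r ^ 2)
  norm_num at recurrence ⊢
  linear_combination (-2 * r ^ 3 * 𝒞 1 (κ * r ^ 2)) * recurrence

lemma IsNeumannFrequency.integral_norm_fderiv_neumannMode_sq (hκ : IsNeumannFrequency κ) :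
    ∫ x in unitDisc, ‖fderiv ℝ (neumannMode κ) x‖ ^ 2 =
      4 * κ * ∫ x in unitDisc, neumannMode κ x ^ 2 := by
  have boundary := intervalIntegral.integral_eq_sub_of_hasDerivAt (a := 0) (b := 1)
    (fun r _ ↦ (hasDerivAt_sq_mul_besselClifford_one_sq κ r).fun_sub
      ((hasDerivAt_pow_four_mul_besselClifford_one_mul_two κ r).const_mul (2 * κ)))
    (Continuous.intervalIntegrable (by fun_prop) _ _)
  have boundary_zero : 𝒞 1 κ ^ 2 - 2 * κ * (𝒞 1 κ * 𝒞 2 κ) = 0 := by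
    linear_combination 𝒞 1 κ * hκ.neumann
  norm_num [boundary_zero] at boundary
  rw [integral_norm_fderiv_neumannMode_sq_eq_radial, integral_neumannMode_sq_eq_radial,
    mul_left_comm]
  congr 1
  rw [← intervalIntegral.integral_const_mul, ← sub_eq_zero,
    ← intervalIntegral.integral_sub (Continuous.intervalIntegrable (by fun_prop) _ _)
      (Continuous.intervalIntegrable (by fun_prop) _ _)]
  refine Eq.trans ?_ boundary
  exact intervalIntegral.integral_congr fun r _ ↦ by ring

lemma IsNeumannFrequency.integral_partialDeriv_one_neumannMode_sq_le
    (hκ : IsNeumannFrequency κ) :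
    ∫ x in unitDisc, partialDeriv 1 (neumannMode κ) x ^ 2 ≤
      κ * ∫ x in unitDisc, neumannMode κ x ^ 2 := by
  have boundary := intervalIntegral.integral_eq_sub_of_hasDerivAt (a := 0) (b := 1)
    (fun r _ ↦ (hasDerivAt_pow_four_mul_besselClifford_one_mul_two κ r).const_mul (κ / 2))
    (Continuous.intervalIntegrable (by fun_prop) _ _)
  have boundary_nonneg : 0 ≤ κ / 2 * (𝒞 1 κ * 𝒞 2 κ) := by
    have : κ / 2 * (𝒞 1 κ * 𝒞 2 κ) = (𝒞 1 κ / 2) ^ 2 := by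
      linear_combination -(𝒞 1 κ / 4) * hκ.neumann
    exact this ▸ sq_nonneg _
  simp only [one_pow, mul_one, one_mul, ne_eq, OfNat.ofNat_ne_zero, not_false_eq_true, zero_pow,
    zero_mul, mul_zero, sub_zero] at boundary
  rw [integral_partialDeriv_one_neumannMode_sq_eq_radial, integral_neumannMode_sq_eq_radial,
    mul_left_comm]
  refine mul_le_mul_of_nonneg_left ?_ pi_pos.le
  rw [← intervalIntegral.integral_const_mul, ← sub_nonneg,
    ← intervalIntegral.integral_sub (Continuous.intervalIntegrable (by fun_prop) _ _)
      (Continuous.intervalIntegrable (by fun_prop) _ _)]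
  refine boundary_nonneg.trans_eq (boundary.symm.trans ?_)
  exact intervalIntegral.integral_congr fun r _ ↦ by ring

lemma IsNeumannFrequency.nEig1_ellipse_le (hκ : IsNeumannFrequency κ) (ht : 0 ≤ t) :
    nEig1 (ellipse t) ≤ (cosh t - sinh t / 2) * (4 * κ) := by
  have grad_cont (i : Fin 2) : Continuous fun x ↦ partialDeriv i (neumannMode κ) x ^ 2 :=
    (continuous_partialDeriv i (contDiff_neumannMode κ)).fun_pow 2
  have norm_cont : Continuous fun x ↦ ‖fderiv ℝ (neumannMode κ) x‖ ^ 2 :=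
    ((contDiff_neumannMode κ).continuous_fderiv one_ne_zero).norm.fun_pow 2
  have split (x : E2) : exp (-t) * partialDeriv 0 (neumannMode κ) x ^ 2 +
      exp t * partialDeriv 1 (neumannMode κ) x ^ 2 =
      exp (-t) * ‖fderiv ℝ (neumannMode κ) x‖ ^ 2 +
        2 * sinh t * partialDeriv 1 (neumannMode κ) x ^ 2 := by
    rw [norm_fderiv_sq_eq_partialDeriv, sinh_eq]
    ring
  refine le_of_mul_le_mul_right ?_ hκ.integral_neumannMode_sq_pos
  calc nEig1 (ellipse t) * ∫ x in unitDisc, neumannMode κ x ^ 2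
    _ ≤ ∫ x in unitDisc, (exp (-t) * partialDeriv 0 (neumannMode κ) x ^ 2 +
          exp t * partialDeriv 1 (neumannMode κ) x ^ 2) := by
      simpa only [ellipse_eq_preimage, neg_neg] using
        nEig1_preimage_stretch_mul_integral_sq_le (isNeumannTest_neumannMode κ) (-t)
    _ = exp (-t) * (∫ x in unitDisc, ‖fderiv ℝ (neumannMode κ) x‖ ^ 2) +
          2 * sinh t * ∫ x in unitDisc, partialDeriv 1 (neumannMode κ) x ^ 2 := by
      simp only [split]
      rw [integral_add, integral_const_mul, integral_const_mul]
      · exact integrableOn_of_isBounded (norm_cont.const_mul _) Metric.isBounded_ball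
      · exact integrableOn_of_isBounded ((grad_cont 1).const_mul _) Metric.isBounded_ball
    _ ≤ exp (-t) * (4 * κ * ∫ x in unitDisc, neumannMode κ x ^ 2) +
          2 * sinh t * (κ * ∫ x in unitDisc, neumannMode κ x ^ 2) := by
      rw [hκ.integral_norm_fderiv_neumannMode_sq]
      gcongr
      exact hκ.integral_partialDeriv_one_neumannMode_sq_le
    _ = (cosh t - sinh t / 2) * (4 * κ) * ∫ x in unitDisc, neumannMode κ x ^ 2 := by
      rw [← cosh_sub_sinh]
      ring

end NeumannMode

section Ellipses

lemma eventually_dEig1_unitDisc_lt_dEig1_ellipse :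
    ∀ᶠ t in 𝓝[>] 0, dEig1 unitDisc < dEig1 (ellipse t) := by
  obtain ⟨S, hS⟩ := exists_isFirstZero
  exact hS.eventually_lt_dEig1_ellipse.mono fun _ ↦ hS.dEig1_unitDisc_le.trans_lt

lemma dEig1_unitDisc_pos : 0 < dEig1 unitDisc := by
  obtain ⟨t, lower⟩ := eventually_dEig1_unitDisc_lt_dEig1_ellipse.exists
  have stretched : 0 < (cosh t - 1) * dEig1 unitDisc := by
    linarith [lower.trans_le (dEig1_ellipse_le t)]
  exact pos_of_mul_pos_right stretched (sub_nonneg.2 (one_le_cosh t))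

lemma nEig1_unitDisc_pos : 0 < nEig1 unitDisc := by
  obtain ⟨S, hS⟩ := exists_isFirstZero
  obtain ⟨κ, hκ⟩ := hS.exists_isNeumannFrequency
  exact (mul_pos four_pos hκ.pos).trans_le hκ.le_nEig1_unitDisc

lemma nEig1_ellipse_le {t : ℝ} (ht : 0 ≤ t) :
    nEig1 (ellipse t) ≤ (cosh t - sinh t / 2) * nEig1 unitDisc := by
  obtain ⟨S, hS⟩ := exists_isFirstZero
  obtain ⟨κ, hκ⟩ := hS.exists_isNeumannFrequency
  refine (hκ.nEig1_ellipse_le ht).trans (mul_le_mul_of_nonneg_left hκ.le_nEig1_unitDisc ?_)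
  linarith [sinh_lt_cosh t, sinh_nonneg_iff.2 ht]

lemma tendsto_mul_nhdsGT_zero {f : ℝ → ℝ} (hf : Continuous f) (hf0 : f 0 = 1) (c : ℝ) :
    Tendsto (fun t ↦ f t * c) (𝓝[>] 0) (𝓝 c) := by
  simpa [hf0] using (hf.mul_const c).continuousWithinAt (s := Ioi 0) (x := 0) |>.tendsto

lemma tendsto_dEig1_ellipse :
    Tendsto (fun t ↦ dEig1 (ellipse t)) (𝓝[>] 0) (𝓝 (dEig1 unitDisc)) :=
  tendsto_of_tendsto_of_tendsto_of_le_of_le' tendsto_const_nhds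
    (tendsto_mul_nhdsGT_zero continuous_cosh cosh_zero _)
    (eventually_dEig1_unitDisc_lt_dEig1_ellipse.mono fun _ ↦ le_of_lt)
    (.of_forall dEig1_ellipse_le)

lemma tendsto_nEig1_ellipse :
    Tendsto (fun t ↦ nEig1 (ellipse t)) (𝓝[>] 0) (𝓝 (nEig1 unitDisc)) :=
  tendsto_of_tendsto_of_tendsto_of_le_of_le'
    (tendsto_mul_nhdsGT_zero (f := fun t ↦ exp (-t)) (by fun_prop) (by simp) _)
    (tendsto_mul_nhdsGT_zero (f := fun t ↦ cosh t - sinh t / 2) (by fun_prop) (by simp) _)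
    (eventually_mem_nhdsWithin.mono fun _ ht ↦ exp_neg_mul_nEig1_unitDisc_le (le_of_lt ht))
    (eventually_mem_nhdsWithin.mono fun _ ht ↦ nEig1_ellipse_le (le_of_lt ht))

lemma cosh_sub_one_le_sinh_sq_div_two (t : ℝ) : cosh t - 1 ≤ sinh t ^ 2 / 2 := by
  nlinarith [cosh_sq t, sq_nonneg (cosh t - 1)]

lemma tendsto_inv_sinh_nhdsGT_zero : Tendsto (fun t ↦ (sinh t)⁻¹) (𝓝[>] 0) atTop := by
  refine tendsto_inv_nhdsGT_zero.comp (tendsto_nhdsWithin_iff.2 ⟨?_, ?_⟩)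
  · simpa using continuous_sinh.continuousWithinAt (s := Ioi 0) (x := 0) |>.tendsto
  · exact eventually_mem_nhdsWithin.mono fun _ ht ↦ sinh_pos_iff.2 ht

lemma le_eigenvalue_slope {t : ℝ} (ht : 0 < t) (sinh_le : sinh t ≤ 1)
    (dEig1_lt : dEig1 unitDisc < dEig1 (ellipse t)) :
    ((sinh t)⁻¹ - 1) * (nEig1 unitDisc / dEig1 unitDisc) ≤
      (nEig1 unitDisc - nEig1 (ellipse t)) / (dEig1 (ellipse t) - dEig1 unitDisc) := by
  have dEig1_pos := dEig1_unitDisc_pos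
  have nEig1_pos := nEig1_unitDisc_pos
  have sinh_pos := sinh_pos_iff.2 ht
  have cosh_le := cosh_sub_one_le_sinh_sq_div_two t
  have increase_le : dEig1 (ellipse t) - dEig1 unitDisc ≤ sinh t ^ 2 / 2 * dEig1 unitDisc := by
    linarith [dEig1_ellipse_le t, mul_le_mul_of_nonneg_right cosh_le dEig1_pos.le]
  have le_decrease :
      (sinh t - sinh t ^ 2) / 2 * nEig1 unitDisc ≤ nEig1 unitDisc - nEig1 (ellipse t) := by
    linarith [nEig1_ellipse_le ht.le, mul_le_mul_of_nonneg_right cosh_le nEig1_pos.le]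
  have slope_nonneg : 0 ≤ (sinh t)⁻¹ - 1 := sub_nonneg.2 ((one_le_inv₀ sinh_pos).2 sinh_le)
  rw [le_div_iff₀ (sub_pos.2 dEig1_lt)]
  calc ((sinh t)⁻¹ - 1) * (nEig1 unitDisc / dEig1 unitDisc) *
        (dEig1 (ellipse t) - dEig1 unitDisc)
    _ ≤ ((sinh t)⁻¹ - 1) * (nEig1 unitDisc / dEig1 unitDisc) *
        (sinh t ^ 2 / 2 * dEig1 unitDisc) := by gcongr
    _ = (sinh t - sinh t ^ 2) / 2 * nEig1 unitDisc := by field_simp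
    _ ≤ nEig1 unitDisc - nEig1 (ellipse t) := le_decrease

lemma tendsto_eigenvalue_slope :
    Tendsto (fun t ↦ (nEig1 unitDisc - nEig1 (ellipse t)) /
      (dEig1 (ellipse t) - dEig1 unitDisc)) (𝓝[>] 0) atTop := by
  have sinh_le : ∀ᶠ t in 𝓝[>] (0 : ℝ), sinh t ≤ 1 :=
    (continuous_sinh.continuousWithinAt.eventually_lt_const (by simp)).mono fun _ ↦ le_of_lt
  refine tendsto_atTop_mono' _ ?_ (Tendsto.atTop_mul_const
    (div_pos nEig1_unitDisc_pos dEig1_unitDisc_pos)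
    (tendsto_atTop_add_const_right _ (-1) tendsto_inv_sinh_nhdsGT_zero))
  filter_upwards [self_mem_nhdsWithin, sinh_le, eventually_dEig1_unitDisc_lt_dEig1_ellipse]
    with t ht sinh_le dEig1_lt using le_eigenvalue_slope ht sinh_le dEig1_lt

end Ellipses

/-- Vertical tangent of the convex diagram at the point `A = (π λ₁(𝔻), π μ₁(𝔻))` of discs:
there is a sequence of convex sets whose diagram points converge to `A` from the right while
the difference quotient towards `A` blows up. -/
theorem vertical_tangent_at_disc :
    ∃ Ω : ℕ → Set E2,
      (∀ n, (Ω n).Nonempty ∧ IsOpen (Ω n) ∧ Bornology.IsBounded (Ω n) ∧ Convex ℝ (Ω n)) ∧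
      (∀ n, π * dEig1 unitDisc < (volume (Ω n)).toReal * dEig1 (Ω n)) ∧
      Tendsto (fun n =>
          ((volume (Ω n)).toReal * dEig1 (Ω n), (volume (Ω n)).toReal * nEig1 (Ω n)))
        atTop (nhds (π * dEig1 unitDisc, π * nEig1 unitDisc)) ∧
      Tendsto (fun n =>
          (π * nEig1 unitDisc - (volume (Ω n)).toReal * nEig1 (Ω n)) /
            ((volume (Ω n)).toReal * dEig1 (Ω n) - π * dEig1 unitDisc))
        atTop atTop := by
  obtain ⟨t, t_tendsto, dEig1_lt⟩ := exists_seq_forall_of_frequently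
    eventually_dEig1_unitDisc_lt_dEig1_ellipse.frequently
  refine ⟨fun n ↦ ellipse (t n), fun n ↦ ⟨nonempty_ellipse _, isOpen_ellipse _,
    isBounded_ellipse _, convex_ellipse _⟩, fun n ↦ ?_, ?_, ?_⟩
  · rw [volume_ellipse]
    exact mul_lt_mul_of_pos_left (dEig1_lt n) pi_pos
  · simp only [volume_ellipse]
    exact ((tendsto_dEig1_ellipse.comp t_tendsto).const_mul π).prodMk_nhds
      ((tendsto_nEig1_ellipse.comp t_tendsto).const_mul π)
  · simp only [volume_ellipse, ← mul_sub, mul_div_mul_left _ _ pi_ne_zero]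
    exact tendsto_eigenvalue_slope.comp t_tendsto
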